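/- arXiv:2512.21143 — 2 statements merged into one kernel-verified Lean document; each statement's English description precedes it below -/
import Mathlib

section
/- Let D be a non-trivial, non-symmetric 2-(v,k,3) design with 3 dividing r, admitting a flag-transitive, point-primitive automorphism group G that is almost simple with socle X = PSL(2,q), where X acts point-primitively on D with point stabilizer X_α maximal in X. Then X_α is not isomorphic to PGL(2,q₀) with q = q₀² odd; that is, the case (q odd square, X_α ≅ PGL(2,√q), v = √q(q+1)/2) does not occur. -/
/-!
For a point `β` let `f β` be the number of involutions of `X` that fix both `α` and `β`.
As `X` is normal in `G`, the weight `f` is invariant under the stabilizer of `α` in `G`, which is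
transitive on the `r` blocks through `α`. Each of these blocks therefore has the same total weight
off `α`, and counting pairs `(B, β)` gives `r ∣ 3 ∑ f β`, the sum over `β ≠ α`
(`IsDesign.rep_dvd`).

The sum is computed from group theory. Since `q = q₀²` is odd, `-1` is a square in the field of
order `q`, so all involutions of `PSL(2,q)` are conjugate (`isConj_invol_PSL2`) and fix equally
many points. There are `q (q + 1) / 2` of them, while `PGL(2,q₀)` has `q₀²` involutions
(`card_invol_PSL2`, `card_invol_PGL2`). With `v = q₀ (q₀² + 1) / 2`, a double count shows that each
involution fixes exactly `q₀` points, whence `∑ f β = q₀² (q₀ - 1)` (`invFix_count`).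

Put `s = r / 3`. Then `s (k - 1) = v - 1`, so `s` is coprime to `q₀`, and
`s ∣ q₀² (q₀ - 1)` forces `s ∣ q₀ - 1`. Fisher's inequality (`IsDesign.fisher`) gives `k ≤ 3 s`,
hence `v - 1 < 3 (q₀ - 1)²`, which contradicts `2 (v - 1) = (q₀ - 1) (q₀² + q₀ + 2)`
(`arith_false`).
-/

open scoped Pointwise
open Matrix

namespace FT

variable {Pt : Type*}

/-- `IsDesign 𝓑 k lam` says that the family `𝓑` of subsets of the point set `Pt` is the
block set of a `2-(v, k, lam)` design: every block has `k` points and any two distinct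
points lie on exactly `lam` common blocks. -/
structure IsDesign (𝓑 : Set (Set Pt)) (k lam : ℕ) : Prop where
  block_card : ∀ B ∈ 𝓑, Nat.card B = k
  pair_count : ∀ x y : Pt, x ≠ y → Nat.card {B : Set Pt | B ∈ 𝓑 ∧ x ∈ B ∧ y ∈ B} = lam

/-- The group `G` acts on the design with point set `Pt` and block set `𝓑` as a group of
automorphisms. -/
def ActsOn (G : Type*) [Group G] [MulAction G Pt] (𝓑 : Set (Set Pt)) : Prop :=
  ∀ (g : G), ∀ B ∈ 𝓑, g • B ∈ 𝓑

/-- The group `G` is transitive on the flags (incident point-block pairs) of the design. -/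
def FlagTransitive (G : Type*) [Group G] [MulAction G Pt] (𝓑 : Set (Set Pt)) : Prop :=
  ∀ B ∈ 𝓑, ∀ C ∈ 𝓑, ∀ x ∈ B, ∀ y ∈ C, ∃ g : G, g • B = C ∧ g • x = y

/-- The action of `G` on `Pt` is primitive: it is transitive and every block of
imprimitivity is trivial. -/
def PointPrimitive (G : Type*) [Group G] (Pt : Type*) [MulAction G Pt] : Prop :=
  MulAction.IsPretransitive G Pt ∧
    ∀ s : Set Pt, MulAction.IsBlock G s → s.Subsingleton ∨ s = Set.univ

/-- The number of blocks of `𝓑` through the point `x` (the replication number, for a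
flag-transitive design). -/
noncomputable def repNum (𝓑 : Set (Set Pt)) (x : Pt) : ℕ :=
  Nat.card {B : Set Pt | B ∈ 𝓑 ∧ x ∈ B}

/-- The projective general linear group `PGL(2,K)`, as the quotient of `GL(2,K)` by its
center. -/
abbrev PGL2 (K : Type*) [Field K] :=
  GL (Fin 2) K ⧸ Subgroup.center (GL (Fin 2) K)

/-- The projective special linear group `PSL(2,K)`. -/
abbrev PSL2 (K : Type*) [Field K] := Matrix.ProjectiveSpecialLinearGroup (Fin 2) K

end FT

open FT

namespace FT

/-! ### Orders and involutions of `PSL₂` and `PGL₂` -/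

/-- The involutions of a group. -/
def invol (H : Type*) [Group H] : Set H := {x | x ≠ 1 ∧ x ^ 2 = 1}

section Matrices

variable {K : Type*} [Field K]

lemma card_SL2 [Fintype K] :
    Nat.card (SpecialLinearGroup (Fin 2) K) =
      Fintype.card K * (Fintype.card K - 1) * (Fintype.card K + 1) := by
  classical
  let φ : (K × Kˣ × K) ⊕ (Kˣ × K) → SpecialLinearGroup (Fin 2) K := fun x => match x with
    | .inl (a, c, d) => ⟨!![a, (a * d - 1) * (c : K)⁻¹; c, d], by
        rw [det_fin_two_of]; field_simp; ring⟩
    | .inr (a, b) => ⟨!![a, b; 0, (a : K)⁻¹], by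
        rw [det_fin_two_of]; field_simp; ring⟩
  have hφ : Function.Bijective φ := by
    constructor
    · rintro (⟨a, c, d⟩ | ⟨a, b⟩) (⟨a', c', d'⟩ | ⟨a', b'⟩) h
      all_goals
        have h1 := congrArg (fun M : SpecialLinearGroup (Fin 2) K => M.1) h
        simp only [φ] at h1
        have e00 := congrFun (congrFun h1 0) 0
        have e01 := congrFun (congrFun h1 0) 1
        have e10 := congrFun (congrFun h1 1) 0
        have e11 := congrFun (congrFun h1 1) 1
        simp at e00 e01 e10 e11
      · simp [e00, Units.ext e10, e11]
      · exact absurd e10.symm c'.ne_zero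
      · simp [Units.ext e00, e01]
    · intro M
      have hd := M.2
      rw [det_fin_two] at hd
      by_cases hc : M.1 1 0 = 0
      · have ha : M.1 0 0 ≠ 0 := by
          intro h; simp [h, hc] at hd
        refine ⟨.inr (Units.mk0 _ ha, M.1 0 1), ?_⟩
        apply Subtype.ext
        rw [hc] at hd
        have : M.1 1 1 = (M.1 0 0)⁻¹ := by field_simp; linear_combination hd
        ext i j
        fin_cases i <;> fin_cases j <;> simp [φ, hc, this]
      · refine ⟨.inl (M.1 0 0, Units.mk0 _ hc, M.1 1 1), ?_⟩
        apply Subtype.ext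
        have : M.1 0 1 = (M.1 0 0 * M.1 1 1 - 1) * (M.1 1 0)⁻¹ := by
          field_simp; linear_combination -hd
        ext i j
        fin_cases i <;> fin_cases j <;> simp [φ, this]
  rw [← Nat.card_eq_of_bijective φ hφ]
  have hq : 0 < Fintype.card K := Fintype.card_pos
  simp only [Nat.card_eq_fintype_card, Fintype.card_sum, Fintype.card_prod, Fintype.card_units]
  obtain ⟨m, hm⟩ : ∃ m, Fintype.card K = m + 1 := ⟨_, (Nat.succ_pred_eq_of_pos hq).symm⟩
  rw [hm]; simp; ring

lemma card_trace_zero_SL2 [Fintype K] (h2 : (2 : K) ≠ 0) (i : K) (hi : i * i = -1) :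
    Nat.card {A : SpecialLinearGroup (Fin 2) K | A.1.trace = 0} =
      Fintype.card K * (Fintype.card K + 1) := by
  classical
  have hi0 : i ≠ 0 := by rintro rfl; simp at hi
  have hii : i ≠ -i := by
    intro h
    have : 2 * i = 0 := by linear_combination h
    rcases mul_eq_zero.1 this with h | h <;> contradiction
  let φ : (K × Kˣ) ⊕ (Bool × K) → {A : SpecialLinearGroup (Fin 2) K | A.1.trace = 0} :=
    fun x => match x with
    | .inl (a, c) => ⟨⟨!![a, (-1 - a * a) * (c : K)⁻¹; c, -a], by
        rw [det_fin_two_of]; field_simp; ring⟩, by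
          change trace _ = 0
          simp [trace_fin_two]⟩
    | .inr (s, b) => ⟨⟨!![if s then i else -i, b; 0, if s then -i else i], by
        rw [det_fin_two_of]; cases s <;> simp [hi]⟩, by
          change trace _ = 0
          cases s <;> simp [trace_fin_two]⟩
  have hφ : Function.Bijective φ := by
    constructor
    · rintro (⟨a, c⟩ | ⟨a, b⟩) (⟨a', c'⟩ | ⟨a', b'⟩) h
      all_goals
        have h1 := congrArg (fun M : {A : SpecialLinearGroup (Fin 2) K | A.1.trace = 0} => M.1.1) h
        simp only [φ] at h1
        have e00 := congrFun (congrFun h1 0) 0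
        have e01 := congrFun (congrFun h1 0) 1
        have e10 := congrFun (congrFun h1 1) 0
        have e11 := congrFun (congrFun h1 1) 1
        simp at e00 e01 e10 e11
      · simp [e00, Units.ext e10]
      · exact absurd e10.symm c'.ne_zero
      · cases a <;> cases a' <;> simp_all
    · rintro ⟨M, hM⟩
      have hd := M.2
      rw [det_fin_two] at hd
      have ht : M.1 0 0 + M.1 1 1 = 0 := by simpa [trace_fin_two] using hM
      have h11 : M.1 1 1 = - M.1 0 0 := by linear_combination ht
      by_cases hc : M.1 1 0 = 0
      · have : (M.1 0 0 - i) * (M.1 0 0 + i) = 0 := by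
          rw [hc, h11] at hd
          linear_combination -hd - hi
        rcases mul_eq_zero.1 this with h | h
        · refine ⟨.inr (true, M.1 0 1), ?_⟩
          apply Subtype.ext; apply Subtype.ext
          have : M.1 0 0 = i := by linear_combination h
          ext i j
          fin_cases i <;> fin_cases j <;> simp [φ, hc, this, h11]
        · refine ⟨.inr (false, M.1 0 1), ?_⟩
          apply Subtype.ext; apply Subtype.ext
          have : M.1 0 0 = -i := by linear_combination h
          ext i j
          fin_cases i <;> fin_cases j <;> simp [φ, hc, this, h11]
      · refine ⟨.inl (M.1 0 0, Units.mk0 _ hc), ?_⟩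
        apply Subtype.ext; apply Subtype.ext
        have : M.1 0 1 = (-1 - M.1 0 0 * M.1 0 0) * (M.1 1 0)⁻¹ := by
          rw [h11] at hd
          field_simp; linear_combination -hd
        ext i j
        fin_cases i <;> fin_cases j <;> simp [φ, this, h11]
  rw [← Nat.card_eq_of_bijective φ hφ]
  have hq : 0 < Fintype.card K := Fintype.card_pos
  simp only [Nat.card_eq_fintype_card, Fintype.card_sum, Fintype.card_prod, Fintype.card_units,
    Fintype.card_bool]
  obtain ⟨m, hm⟩ : ∃ m, Fintype.card K = m + 1 := ⟨_, (Nat.succ_pred_eq_of_pos hq).symm⟩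
  rw [hm]; simp; ring

lemma card_trace_zero_GL2 [Fintype K] :
    Nat.card {A : GL (Fin 2) K | A.1.trace = 0} =
      Fintype.card K ^ 2 * (Fintype.card K - 1) := by
  classical
  -- If the lower-left entry `c` is a unit, then `e`, minus the determinant, is a free unit
  -- parameter that determines the upper-right entry; if `c = 0`, the diagonal entry is a unit.
  let φ : (K × Kˣ × Kˣ) ⊕ (Kˣ × K) → {A : GL (Fin 2) K | A.1.trace = 0} :=
    fun x => match x with
    | .inl (a, c, e) => ⟨GeneralLinearGroup.mkOfDetNeZero !![a, (e - a * a) * (c : K)⁻¹; c, -a] (by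
        rw [det_fin_two_of]; field_simp; ring_nf; simp), by
          change trace _ = 0
          simp [trace_fin_two, GeneralLinearGroup.mkOfDetNeZero]⟩
    | .inr (a, b) => ⟨GeneralLinearGroup.mkOfDetNeZero !![(a : K), b; 0, -a] (by
        rw [det_fin_two_of]; simp), by
          change trace _ = 0
          simp [trace_fin_two, GeneralLinearGroup.mkOfDetNeZero]⟩
  have hφ : Function.Bijective φ := by
    constructor
    · rintro (⟨a, c, e⟩ | ⟨a, b⟩) (⟨a', c', e'⟩ | ⟨a', b'⟩) h
      all_goals
        have h1 := congrArg (fun M : {A : GL (Fin 2) K | A.1.trace = 0} => M.1.1) h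
        simp only [φ, GeneralLinearGroup.mkOfDetNeZero] at h1
        have e00 := congrFun (congrFun h1 0) 0
        have e01 := congrFun (congrFun h1 0) 1
        have e10 := congrFun (congrFun h1 1) 0
        have e11 := congrFun (congrFun h1 1) 1
        simp at e00 e01 e10 e11
      · obtain rfl := Units.ext e10
        subst e00
        simp at e01
        simp [Units.ext e01]
      · exact absurd e10.symm c'.ne_zero
      · simp [Units.ext e00, e01]
    · rintro ⟨M, hM⟩
      have hd : M.1.det ≠ 0 := ((isUnit_iff_isUnit_det _).1 M.isUnit).ne_zero
      rw [det_fin_two] at hd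
      have ht : M.1 0 0 + M.1 1 1 = 0 := by simpa [trace_fin_two] using hM
      have h11 : M.1 1 1 = - M.1 0 0 := by linear_combination ht
      by_cases hc : M.1 1 0 = 0
      · have ha : M.1 0 0 ≠ 0 := by
          intro h; simp [h, hc] at hd
        refine ⟨.inr (Units.mk0 _ ha, M.1 0 1), ?_⟩
        apply Subtype.ext; apply Units.ext
        ext i j
        fin_cases i <;> fin_cases j <;>
          simp [φ, hc, h11, GeneralLinearGroup.mkOfDetNeZero]
      · have he : M.1 0 0 * M.1 0 0 + M.1 0 1 * M.1 1 0 ≠ 0 := by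
          intro h; apply hd; rw [h11]; linear_combination -h
        refine ⟨.inl (M.1 0 0, Units.mk0 _ hc, Units.mk0 _ he), ?_⟩
        apply Subtype.ext; apply Units.ext
        ext i j
        fin_cases i <;> fin_cases j <;>
          simp [φ, hc, h11, GeneralLinearGroup.mkOfDetNeZero]
  rw [← Nat.card_eq_of_bijective φ hφ]
  have hq : 0 < Fintype.card K := Fintype.card_pos
  simp only [Nat.card_eq_fintype_card, Fintype.card_sum, Fintype.card_prod, Fintype.card_units]
  obtain ⟨m, hm⟩ : ∃ m, Fintype.card K = m + 1 := ⟨_, (Nat.succ_pred_eq_of_pos hq).symm⟩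
  rw [hm]; simp; ring

lemma mem_center_SL2 {A : SpecialLinearGroup (Fin 2) K} :
    A ∈ Subgroup.center (SpecialLinearGroup (Fin 2) K) ↔
      A.1 0 1 = 0 ∧ A.1 1 0 = 0 ∧ A.1 0 0 = A.1 1 1 := by
  rw [Matrix.SpecialLinearGroup.mem_center_iff]
  constructor
  · rintro ⟨r, -, h⟩
    simp [← h]
  · rintro ⟨h1, h2, h3⟩
    have hd := A.2
    rw [det_fin_two] at hd
    refine ⟨A.1 0 0, ?_, ?_⟩
    · rw [h1, ← h3] at hd
      rw [Fintype.card_fin]; linear_combination hd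
    · ext i j
      fin_cases i <;> fin_cases j <;> simp [h1, h2, h3]

lemma card_center_SL2 (h2 : (2 : K) ≠ 0) :
    Nat.card (Subgroup.center (SpecialLinearGroup (Fin 2) K)) = 2 := by
  have h1 : (1 : SpecialLinearGroup (Fin 2) K) ≠ -1 := by
    intro h
    have := congrArg (fun M : SpecialLinearGroup (Fin 2) K => M.1 0 0) h
    simp at this
    exact h2 (by linear_combination this)
  have : (Subgroup.center (SpecialLinearGroup (Fin 2) K) : Set (SpecialLinearGroup (Fin 2) K)) =
      {1, -1} := by
    ext A
    rw [SetLike.mem_coe, mem_center_SL2]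
    constructor
    · rintro ⟨h1, h2, h3⟩
      have hd := A.2
      rw [det_fin_two, h1, ← h3] at hd
      have : (A.1 0 0 - 1) * (A.1 0 0 + 1) = 0 := by linear_combination hd
      rcases mul_eq_zero.1 this with h | h
      · left
        have h0 : A.1 0 0 = 1 := by linear_combination h
        apply Subtype.ext
        ext i j
        fin_cases i <;> fin_cases j <;> simp [h1, h2, ← h3, h0]
      · right
        have h0 : A.1 0 0 = -1 := by linear_combination h
        apply Subtype.ext
        ext i j
        fin_cases i <;> fin_cases j <;> simp [h1, h2, ← h3, h0]
    · rintro (rfl | rfl) <;> simp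
  have h := Set.ncard_pair h1
  rw [← this] at h
  exact h

lemma mem_center_GL2 {A : GL (Fin 2) K} :
    A ∈ Subgroup.center (GL (Fin 2) K) ↔
      A.1 0 1 = 0 ∧ A.1 1 0 = 0 ∧ A.1 0 0 = A.1 1 1 := by
  rw [Subgroup.mem_center_iff]
  constructor
  · intro h
    have e1 := congrArg Units.val
      (h (GeneralLinearGroup.mkOfDetNeZero !![1, 1; 0, 1] (by simp)))
    have e2 := congrArg Units.val
      (h (GeneralLinearGroup.mkOfDetNeZero !![1, 0; 1, 1] (by simp)))
    have a1 := congrFun (congrFun e1 0) 0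
    have a2 := congrFun (congrFun e1 0) 1
    have a3 := congrFun (congrFun e2 0) 0
    simp [GeneralLinearGroup.mkOfDetNeZero, mul_apply, Fin.sum_univ_two] at a1 a2 a3
    refine ⟨a3, a1, ?_⟩
    linear_combination -a2
  · rintro ⟨h1, h2, h3⟩ B
    apply Units.ext
    ext i j
    fin_cases i <;> fin_cases j <;>
      simp [mul_apply, Fin.sum_univ_two, h1, h2, h3, mul_comm]

lemma card_center_GL2 [Fintype K] :
    Nat.card (Subgroup.center (GL (Fin 2) K)) = Fintype.card K - 1 := by
  classical
  let φ : Kˣ → Subgroup.center (GL (Fin 2) K) := fun a =>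
    ⟨GeneralLinearGroup.mkOfDetNeZero !![(a : K), 0; 0, a] (by simp), by
      rw [mem_center_GL2]; simp [GeneralLinearGroup.mkOfDetNeZero]⟩
  have hφ : Function.Bijective φ := by
    constructor
    · intro a b h
      have := congrArg (fun M : Subgroup.center (GL (Fin 2) K) => M.1.1 0 0) h
      simp [φ, GeneralLinearGroup.mkOfDetNeZero] at this
      exact Units.ext this
    · rintro ⟨M, hM⟩
      obtain ⟨h1, h2, h3⟩ := mem_center_GL2.1 hM
      have hd : M.1.det ≠ 0 := ((isUnit_iff_isUnit_det _).1 M.isUnit).ne_zero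
      rw [det_fin_two, h1, ← h3] at hd
      have ha : M.1 0 0 ≠ 0 := by
        intro h; simp [h] at hd
      refine ⟨Units.mk0 _ ha, ?_⟩
      apply Subtype.ext; apply Units.ext
      ext i j
      fin_cases i <;> fin_cases j <;>
        simp [φ, h1, h2, ← h3, GeneralLinearGroup.mkOfDetNeZero]
  rw [← Nat.card_eq_of_bijective φ hφ, Nat.card_eq_fintype_card, Fintype.card_units]

/-- An invertible `A` has scalar square without being scalar itself iff its trace vanishes
(`A² = (tr A) A - det A`). -/
lemma sq_scalar_iff (h2 : (2 : K) ≠ 0) (A : Matrix (Fin 2) (Fin 2) K) (hA : A.det ≠ 0) :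
    (¬ (A 0 1 = 0 ∧ A 1 0 = 0 ∧ A 0 0 = A 1 1) ∧
      ((A ^ 2) 0 1 = 0 ∧ (A ^ 2) 1 0 = 0 ∧ (A ^ 2) 0 0 = (A ^ 2) 1 1)) ↔ A.trace = 0 := by
  rw [det_fin_two] at hA
  simp only [pow_two, mul_apply, Fin.sum_univ_two, trace_fin_two]
  generalize A 0 0 = a at *
  generalize A 0 1 = b at *
  generalize A 1 0 = c at *
  generalize A 1 1 = d at *
  constructor
  · rintro ⟨h, e1, e2, e3⟩
    by_contra ht
    apply h
    refine ⟨?_, ?_, ?_⟩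
    · exact (mul_eq_zero.1 (by linear_combination e1 : (a + d) * b = 0)).resolve_left ht
    · exact (mul_eq_zero.1 (by linear_combination e2 : (a + d) * c = 0)).resolve_left ht
    · have := (mul_eq_zero.1 (by linear_combination e3 : (a + d) * (a - d) = 0)).resolve_left ht
      linear_combination this
  · intro h
    obtain rfl : d = -a := by linear_combination h
    refine ⟨?_, by ring, by ring, by ring⟩
    rintro ⟨rfl, rfl, h3⟩
    have : 2 * a = 0 := by linear_combination h3
    have ha := (mul_eq_zero.1 this).resolve_left h2
    simp [ha] at hA

lemma card_preimage_mk {H : Type*} [Group H] (N : Subgroup H) [N.Normal] (t : Set (H ⧸ N)) :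
    Nat.card {x : H | (x : H ⧸ N) ∈ t} = Nat.card N * Nat.card t := by
  rw [← Nat.card_prod]
  exact Nat.card_congr (QuotientGroup.preimageMkEquivSubgroupProdSet N t)

lemma mk_mem_invol {H : Type*} [Group H] (N : Subgroup H) [N.Normal] (x : H) :
    (x : H ⧸ N) ∈ invol (H ⧸ N) ↔ x ∉ N ∧ x ^ 2 ∈ N := by
  simp only [invol, Set.mem_ofPred_eq, ne_eq]
  rw [← QuotientGroup.mk_pow, QuotientGroup.eq_one_iff, QuotientGroup.eq_one_iff]

lemma mk_mem_invol_PSL2 (h2 : (2 : K) ≠ 0) (A : SpecialLinearGroup (Fin 2) K) :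
    (QuotientGroup.mk A : PSL2 K) ∈ invol (PSL2 K) ↔ A.1.trace = 0 := by
  have h := mk_mem_invol (Subgroup.center (SpecialLinearGroup (Fin 2) K)) A
  rw [mem_center_SL2, mem_center_SL2] at h
  rw [← sq_scalar_iff h2 A.1 (by rw [A.2]; exact one_ne_zero)]
  exact h

lemma mk_mem_invol_PGL2 (h2 : (2 : K) ≠ 0) (A : GL (Fin 2) K) :
    (QuotientGroup.mk A : PGL2 K) ∈ invol (PGL2 K) ↔ A.1.trace = 0 := by
  have h := mk_mem_invol (Subgroup.center (GL (Fin 2) K)) A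
  rw [mem_center_GL2, mem_center_GL2] at h
  rw [← sq_scalar_iff h2 A.1 ((isUnit_iff_isUnit_det _).1 A.isUnit).ne_zero]
  exact h

lemma card_PSL2 [Fintype K] (h2 : (2 : K) ≠ 0) :
    2 * Nat.card (PSL2 K) = Fintype.card K * (Fintype.card K - 1) * (Fintype.card K + 1) := by
  have := Subgroup.card_eq_card_quotient_mul_card_subgroup
    (Subgroup.center (SpecialLinearGroup (Fin 2) K))
  rw [card_SL2, card_center_SL2 h2, mul_comm _ 2] at this
  exact this.symm

lemma card_invol_PSL2 [Fintype K] (h2 : (2 : K) ≠ 0) (i : K) (hi : i * i = -1) :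
    2 * Nat.card (invol (PSL2 K)) = Fintype.card K * (Fintype.card K + 1) := by
  have h := card_preimage_mk (Subgroup.center (SpecialLinearGroup (Fin 2) K)) (invol (PSL2 K))
  rw [card_center_SL2 h2] at h
  rw [← h, ← card_trace_zero_SL2 h2 i hi]
  congr 1
  exact congrArg (fun s : Set (SpecialLinearGroup (Fin 2) K) => (s : Type _))
    (Set.ext fun A => mk_mem_invol_PSL2 h2 A)

lemma card_PGL2 [Fintype K] :
    Nat.card (PGL2 K) = Fintype.card K * (Fintype.card K - 1) * (Fintype.card K + 1) := by
  have := Subgroup.card_eq_card_quotient_mul_card_subgroup (Subgroup.center (GL (Fin 2) K))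
  rw [card_center_GL2, card_GL_field] at this
  have hq : 1 < Fintype.card K := Fintype.one_lt_card
  obtain ⟨m, hm⟩ : ∃ m, Fintype.card K = m + 1 :=
    ⟨_, (Nat.succ_pred_eq_of_pos (by omega)).symm⟩
  simp only [Fin.prod_univ_two] at this
  rw [hm] at this ⊢
  simp only [Nat.add_sub_cancel] at this ⊢
  have hm0 : 0 < m := by omega
  apply Nat.eq_of_mul_eq_mul_right hm0
  refine this.symm.trans ?_
  have e1 : (m + 1) ^ 2 - (m + 1) ^ ((0 : Fin 2) : ℕ) = m * (m + 2) := by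
    have : (m + 1) ^ 2 = m * (m + 2) + 1 := by ring
    simp; omega
  have e2 : (m + 1) ^ 2 - (m + 1) ^ ((1 : Fin 2) : ℕ) = m * (m + 1) := by
    have : (m + 1) ^ 2 = m * (m + 1) + (m + 1) := by ring
    simp; omega
  rw [e1, e2]; ring

lemma card_invol_PGL2 [Fintype K] (h2 : (2 : K) ≠ 0) :
    Nat.card (invol (PGL2 K)) = Fintype.card K ^ 2 := by
  have h := card_preimage_mk (Subgroup.center (GL (Fin 2) K)) (invol (PGL2 K))
  have hq : 1 < Fintype.card K := Fintype.one_lt_card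
  have hS : Nat.card {x : GL (Fin 2) K | (QuotientGroup.mk x : PGL2 K) ∈ invol (PGL2 K)} =
      Nat.card {A : GL (Fin 2) K | A.1.trace = 0} :=
    congrArg (fun s : Set (GL (Fin 2) K) => Nat.card s)
      (Set.ext fun A => mk_mem_invol_PGL2 h2 A)
  rw [card_center_GL2] at h
  rw [card_trace_zero_GL2] at hS
  apply Nat.eq_of_mul_eq_mul_left (show 0 < Fintype.card K - 1 by omega)
  rw [mul_comm _ (Fintype.card K ^ 2), ← hS]
  exact h.symm

/-- A trace-zero element of `SL₂(K)` has the distinct eigenvalues `±i` with `i² = -1`, and the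
diagonalising matrix can be rescaled to have determinant `1`. -/
lemma exists_conj_diag (h2 : (2 : K) ≠ 0) (i : K) (hi : i * i = -1)
    (A : SpecialLinearGroup (Fin 2) K) (hA : A.1.trace = 0) :
    ∃ P : SpecialLinearGroup (Fin 2) K, A.1 * P.1 = P.1 * !![i, 0; 0, -i] := by
  have hi0 : i ≠ 0 := by rintro rfl; simp at hi
  have hd := A.2
  rw [det_fin_two] at hd
  rw [trace_fin_two] at hA
  have hAe : A.1 = !![A.1 0 0, A.1 0 1; A.1 1 0, A.1 1 1] := eta_fin_two A.1
  rw [hAe]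
  generalize A.1 0 0 = a at *
  generalize A.1 0 1 = b at *
  generalize A.1 1 0 = c at *
  generalize A.1 1 1 = d at *
  obtain rfl : d = -a := by linear_combination hA
  by_cases hc : c = 0
  · subst hc
    have : (a - i) * (a + i) = 0 := by linear_combination -hd - hi
    rcases mul_eq_zero.1 this with h | h
    · obtain rfl : a = i := by linear_combination h
      refine ⟨⟨!![1, -b / (2 * a); 0, 1], by simp⟩, ?_⟩
      ext i j
      fin_cases i <;> fin_cases j <;> simp
      field_simp; ring
    · obtain rfl : a = -i := by linear_combination h
      refine ⟨⟨!![b, -1 / (2 * i); 2 * i, 0], by rw [det_fin_two_of]; field_simp; ring⟩, ?_⟩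
      ext i j
      fin_cases i <;> fin_cases j <;> simp <;> field_simp
      ring
  · refine ⟨⟨!![a + i, (a - i) / (2 * i * c); c, 1 / (2 * i)], by
      rw [det_fin_two_of]; field_simp; ring⟩, ?_⟩
    ext k j
    fin_cases k <;> fin_cases j <;> simp
    · linear_combination -hd - hi
    · field_simp; linear_combination -hd - hi
    · ring
    · field_simp; ring

/-- When `2 ≠ 0` and `-1` is a square, the involutions of `PSL₂(K)` form a single conjugacy class. -/
lemma isConj_invol_PSL2 (h2 : (2 : K) ≠ 0) (i : K) (hi : i * i = -1)
    (x y : PSL2 K) (hx : x ∈ invol (PSL2 K)) (hy : y ∈ invol (PSL2 K)) : IsConj x y := by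
  obtain ⟨A, rfl⟩ := QuotientGroup.mk_surjective x
  obtain ⟨B, rfl⟩ := QuotientGroup.mk_surjective y
  obtain ⟨P, hP⟩ := exists_conj_diag h2 i hi A ((mk_mem_invol_PSL2 h2 A).1 hx)
  obtain ⟨Q, hQ⟩ := exists_conj_diag h2 i hi B ((mk_mem_invol_PSL2 h2 B).1 hy)
  let D : SpecialLinearGroup (Fin 2) K := ⟨!![i, 0; 0, -i], by simp [hi]⟩
  have hP' : A * P = P * D := Subtype.ext hP
  have hQ' : B * Q = Q * D := Subtype.ext hQ
  have hAB : IsConj A B := by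
    rw [isConj_iff]
    refine ⟨Q * P⁻¹, ?_⟩
    have e1 : A = P * D * P⁻¹ := by rw [← hP']; group
    have e2 : B = Q * D * Q⁻¹ := by rw [← hQ']; group
    rw [e1, e2]; group
  exact (QuotientGroup.mk' (Subgroup.center (SpecialLinearGroup (Fin 2) K))).map_isConj hAB

end Matrices

end FT

namespace FT

/-! ### Counting in designs -/

section Designs

variable {Pt : Type*} [Fintype Pt]

open Classical in
/-- Weighted count of the pairs `(B, y)` with `x, y ∈ B` and `y ≠ x`. -/
lemma IsDesign.weighted_count {𝓑 : Set (Set Pt)} {k lam : ℕ} (hD : IsDesign 𝓑 k lam)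
    {R : Type*} [CommSemiring R] (w : Pt → R) (x : Pt) :
    ∑ B : Set Pt with B ∈ 𝓑 ∧ x ∈ B, ∑ y : Pt with y ∈ B ∧ y ≠ x, w y =
      lam * ∑ y : Pt with y ≠ x, w y := by
  have h1 : ∀ B : Set Pt, ∑ y : Pt with y ∈ B ∧ y ≠ x, w y =
      ∑ y : Pt with y ≠ x, if y ∈ B then w y else 0 := by
    intro B
    rw [← Finset.sum_filter, Finset.filter_filter]
    exact Finset.sum_congr (Finset.filter_congr fun y _ => and_comm) fun _ _ => rfl
  simp_rw [h1]
  rw [Finset.sum_comm, Finset.mul_sum]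
  refine Finset.sum_congr rfl fun y hy => ?_
  have hy : y ≠ x := by simpa using hy
  rw [← Finset.sum_filter, Finset.sum_const, nsmul_eq_mul, ← hD.pair_count x y hy.symm,
    Finset.filter_filter, Nat.card_eq_fintype_card, Fintype.card_subtype]
  congr 3
  ext B
  simp only [Finset.mem_filter, Finset.mem_univ, true_and, and_assoc, Set.mem_ofPred_eq]

open Classical in
lemma repNum_eq (𝓑 : Set (Set Pt)) (x : Pt) :
    repNum 𝓑 x = (Finset.univ.filter fun B : Set Pt => B ∈ 𝓑 ∧ x ∈ B).card := by
  rw [repNum, Nat.card_eq_fintype_card, Fintype.card_subtype]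
  rfl

open Classical in
lemma IsDesign.filter_card {𝓑 : Set (Set Pt)} {k lam : ℕ} (hD : IsDesign 𝓑 k lam)
    {B : Set Pt} (hB : B ∈ 𝓑) : (Finset.univ.filter fun y : Pt => y ∈ B).card = k := by
  rw [← hD.block_card B hB, Nat.card_eq_fintype_card, Fintype.card_subtype]

open Classical in
/-- The identity `r (k - 1) = λ (v - 1)`. -/
lemma IsDesign.rep_mul {𝓑 : Set (Set Pt)} {k lam : ℕ} (hD : IsDesign 𝓑 k lam) (x : Pt) :
    repNum 𝓑 x * (k - 1) = lam * (Fintype.card Pt - 1) := by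
  have h := hD.weighted_count (fun _ => (1 : ℕ)) x
  simp only [Finset.sum_const, smul_eq_mul, mul_one, Nat.cast_id] at h
  have h1 : (Finset.univ.filter fun y : Pt => y ≠ x).card = Fintype.card Pt - 1 := by
    rw [Finset.filter_ne', Finset.card_erase_of_mem (Finset.mem_univ _), Finset.card_univ]
  rw [h1] at h
  rw [← h, repNum_eq, ← smul_eq_mul, ← Finset.sum_const]
  refine Finset.sum_congr rfl fun B hB => ?_
  obtain ⟨hB, hx⟩ := (Finset.mem_filter.1 hB).2
  rw [← hD.filter_card hB, ← Finset.card_erase_of_mem (show x ∈ _ by simpa using hx)]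
  congr 1
  ext y
  simp [and_comm]

open Classical in
/-- The identity `b k = v r`. -/
lemma IsDesign.card_mul {𝓑 : Set (Set Pt)} {k lam r : ℕ} (hD : IsDesign 𝓑 k lam)
    (hr : ∀ x, repNum 𝓑 x = r) : Nat.card 𝓑 * k = Fintype.card Pt * r := by
  have h := Finset.sum_card_bipartiteAbove_eq_sum_card_bipartiteBelow
    (s := Finset.univ.filter fun B : Set Pt => B ∈ 𝓑) (t := (Finset.univ : Finset Pt))
    (r := fun B y => y ∈ B)
  have e1 : ∀ B ∈ Finset.univ.filter (fun B : Set Pt => B ∈ 𝓑),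
      (Finset.bipartiteAbove (fun B y => y ∈ B) (Finset.univ : Finset Pt) B).card = k :=
    fun B hB => hD.filter_card (Finset.mem_filter.1 hB).2
  have e2 : ∀ y ∈ (Finset.univ : Finset Pt),
      (Finset.bipartiteBelow (fun (B : Set Pt) y => y ∈ B)
        (Finset.univ.filter fun B : Set Pt => B ∈ 𝓑) y).card = r := by
    intro y _
    rw [← hr y, repNum_eq, Finset.bipartiteBelow, Finset.filter_filter]
  rw [Finset.sum_congr rfl e1, Finset.sum_congr rfl e2] at h
  simpa [Nat.card_eq_fintype_card, Fintype.card_subtype] using h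

open Classical in
/-- Fisher's inequality: if `λ < r` then there are at least as many blocks as points, since the
map sending a weight on points to its block sums is injective. -/
lemma IsDesign.fisher {𝓑 : Set (Set Pt)} {k lam r : ℕ} (hD : IsDesign 𝓑 k lam)
    (hr : ∀ x, repNum 𝓑 x = r) (hlam : lam < r) : Fintype.card Pt ≤ Nat.card 𝓑 := by
  let T : (Pt → ℚ) →ₗ[ℚ] (𝓑 → ℚ) :=
    { toFun := fun c B => ∑ y : Pt with y ∈ B.1, c y
      map_add' := fun c d => by ext B; simp [Finset.sum_add_distrib]
      map_smul' := fun a c => by ext B; simp [Finset.mul_sum] }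
  have hT : Function.Injective T := by
    rw [injective_iff_map_eq_zero]
    intro c hc
    have hB : ∀ B ∈ 𝓑, ∑ y : Pt with y ∈ B, c y = 0 := fun B hB => congrFun hc ⟨B, hB⟩
    -- Summing the block sums over the blocks through `x` gives `r c(x) + λ (S - c(x))`.
    have key : ∀ x, ((r : ℚ) - lam) * c x = - (lam * ∑ y, c y) := by
      intro x
      have h := hD.weighted_count c x
      have e1 : ∀ B ∈ Finset.univ.filter (fun B : Set Pt => B ∈ 𝓑 ∧ x ∈ B),
          ∑ y : Pt with y ∈ B ∧ y ≠ x, c y = - c x := by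
        intro B hB'
        obtain ⟨hB', hx⟩ := (Finset.mem_filter.1 hB').2
        have := hB B hB'
        rw [← Finset.add_sum_erase _ _ (show x ∈ _ by simpa using hx)] at this
        rw [← add_eq_zero_iff_eq_neg, add_comm, ← this]
        congr 1
        refine Finset.sum_congr ?_ fun _ _ => rfl
        ext y
        simp [and_comm]
      rw [Finset.sum_congr rfl e1, Finset.sum_const, ← repNum_eq, hr, nsmul_eq_mul,
        Finset.filter_ne'] at h
      have e2 := Finset.add_sum_erase Finset.univ c (Finset.mem_univ x)
      rw [← e2]
      linear_combination -h
    have hpos : (0 : ℚ) < r - lam := by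
      have : (lam : ℚ) < r := by exact_mod_cast hlam
      linarith
    have hS : ∑ y, c y = 0 := by
      have h := Finset.sum_congr (rfl : (Finset.univ : Finset Pt) = _) fun x _ => key x
      rw [← Finset.mul_sum, Finset.sum_const, Finset.card_univ, nsmul_eq_mul] at h
      have h' : ((r : ℚ) - lam + Fintype.card Pt * lam) * ∑ y, c y = 0 := by
        linear_combination h
      refine (mul_eq_zero.1 h').resolve_left ?_
      positivity
    ext x
    have h := key x
    rw [hS, mul_zero, neg_zero] at h
    exact (mul_eq_zero.1 h).resolve_left hpos.ne'
  have h := LinearMap.finrank_le_finrank_of_injective hT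
  rwa [Module.finrank_fintype_fun_eq_card, Module.finrank_fintype_fun_eq_card,
    ← Nat.card_eq_fintype_card (α := 𝓑)] at h

open Classical in
/-- For a weight on points invariant under the stabilizer of `x` in a flag-transitive group, each
block through `x` carries the same weight outside `x`, so `r` divides `λ` times the total weight
outside `x`. -/
lemma IsDesign.rep_dvd {𝓑 : Set (Set Pt)} {k lam : ℕ} (hD : IsDesign 𝓑 k lam)
    {G : Type*} [Group G] [MulAction G Pt] (hflag : FlagTransitive G 𝓑) (x : Pt) (w : Pt → ℕ)
    (hw : ∀ g : G, g • x = x → ∀ y, w (g • y) = w y) :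
    repNum 𝓑 x ∣ lam * ∑ y : Pt with y ≠ x, w y := by
  have h := hD.weighted_count w x
  rw [Nat.cast_id] at h
  rw [← h]
  by_cases hne : (Finset.univ.filter fun B : Set Pt => B ∈ 𝓑 ∧ x ∈ B).Nonempty
  · obtain ⟨B₀, hB₀⟩ := hne
    obtain ⟨hB₀, hx₀⟩ := (Finset.mem_filter.1 hB₀).2
    have e1 : ∀ B ∈ Finset.univ.filter (fun B : Set Pt => B ∈ 𝓑 ∧ x ∈ B),
        ∑ y : Pt with y ∈ B ∧ y ≠ x, w y = ∑ y : Pt with y ∈ B₀ ∧ y ≠ x, w y := by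
      intro B hB
      obtain ⟨hB, hx⟩ := (Finset.mem_filter.1 hB).2
      obtain ⟨g, hg, hgx⟩ := hflag B hB B₀ hB₀ x hx x hx₀
      refine Finset.sum_equiv (MulAction.toPerm g) ?_ ?_
      · intro y
        have h1 : g • y ∈ B₀ ↔ y ∈ B := by rw [← hg, Set.smul_mem_smul_set_iff]
        have h2 : g • y = x ↔ y = x := by
          conv_lhs => rw [← hgx]
          exact smul_left_cancel_iff g
        simp [h1, h2]
      · intro y _
        exact (hw g hgx y).symm
    rw [Finset.sum_congr rfl e1, Finset.sum_const, repNum_eq, smul_eq_mul]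
    exact dvd_mul_right _ _
  · rw [Finset.not_nonempty_iff_eq_empty.1 hne]
    simp

end Designs

/-! ### Involutions and fixed points -/

section Involutions

variable {Pt : Type*}

/-- The number of involutions of `X` fixing both `x` and `y`. -/
noncomputable def invFix (X : Type*) [Group X] [MulAction X Pt] (x y : Pt) : ℕ :=
  Nat.card {t : X // t ∈ invol X ∧ t • x = x ∧ t • y = y}

lemma mem_invol_map {H H' : Type*} [Group H] [Group H'] (e : H ≃* H') (t : H) :
    e t ∈ invol H' ↔ t ∈ invol H := by
  simp only [invol, Set.mem_ofPred_eq, ne_eq, EmbeddingLike.map_eq_one_iff, ← map_pow]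

lemma card_invol_congr {H H' : Type*} [Group H] [Group H'] (e : H ≃* H') :
    Nat.card (invol H) = Nat.card (invol H') :=
  Nat.card_congr (e.toEquiv.subtypeEquiv fun t => (mem_invol_map e t).symm)

lemma invFix_smul {X : Type*} [Group X] [MulAction X Pt] (e : X ≃* X) (g : Equiv.Perm Pt)
    (h : ∀ t y, e t • g y = g (t • y)) (x y : Pt) :
    invFix X (g x) (g y) = invFix X x y := by
  refine (Nat.card_congr (e.toEquiv.subtypeEquiv fun t => ?_)).symm
  change _ ↔ e t ∈ invol X ∧ e t • g x = g x ∧ e t • g y = g y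
  rw [mem_invol_map, h, h, g.apply_eq_iff_eq, g.apply_eq_iff_eq]

lemma invFix_self {X : Type*} [Group X] [MulAction X Pt] (x : Pt) :
    invFix X x x = Nat.card (invol (MulAction.stabilizer X x)) := by
  refine Nat.card_congr
    { toFun := fun t => ⟨⟨t.1, t.2.2.1⟩, ?_, ?_⟩
      invFun := fun t => ⟨t.1.1, ⟨?_, ?_⟩, t.1.2, t.1.2⟩
      left_inv := fun t => rfl
      right_inv := fun t => rfl }
  · exact fun h => t.2.1.1 (congrArg Subtype.val h)
  · exact Subtype.ext t.2.1.2
  · exact fun h => t.2.1 (Subtype.ext h)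
  · exact congrArg Subtype.val t.2.2

variable [Fintype Pt]

open Classical in
/-- If all involutions of a transitive group are conjugate, each fixes the same number `m` of
points; counting incident pairs (involution, fixed point) yields `m`, and the involutions of a
point stabilizer together fix `m` times their number of points. -/
lemma invFix_count {X : Type*} [Group X] [Finite X] [MulAction X Pt]
    [MulAction.IsPretransitive X Pt]
    (hconj : ∀ s t : X, s ∈ invol X → t ∈ invol X → IsConj s t) (x : Pt) :
    ∃ m : ℕ, Nat.card (invol X) * m = Fintype.card Pt * invFix X x x ∧
      ∑ y, invFix X x y = invFix X x x * m := by
  have := Fintype.ofFinite X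
  let fixN : X → ℕ := fun t => (Finset.univ.filter fun y : Pt => t • y = y).card
  have hfix : ∃ m, ∀ t ∈ invol X, fixN t = m := by
    by_cases hne : (invol X).Nonempty
    · obtain ⟨s, hs⟩ := hne
      refine ⟨fixN s, fun t ht => ?_⟩
      obtain ⟨c, hc⟩ := isConj_iff.1 (hconj t s ht hs)
      refine Finset.card_equiv (MulAction.toPerm c) fun y => ?_
      simp [← hc, mul_smul]
    · exact ⟨0, fun t ht => absurd ⟨t, ht⟩ hne⟩
  obtain ⟨m, hm⟩ := hfix
  refine ⟨m, ?_, ?_⟩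
  · have h := Finset.sum_card_bipartiteAbove_eq_sum_card_bipartiteBelow
      (s := Finset.univ.filter fun t : X => t ∈ invol X) (t := (Finset.univ : Finset Pt))
      (r := fun t y => t • y = y)
    have e1 : ∀ t ∈ Finset.univ.filter (fun t : X => t ∈ invol X),
        (Finset.bipartiteAbove (fun (t : X) y => t • y = y) (Finset.univ : Finset Pt) t).card
          = m :=
      fun t ht => hm t (Finset.mem_filter.1 ht).2
    have e2 : ∀ y ∈ (Finset.univ : Finset Pt),
        (Finset.bipartiteBelow (fun (t : X) (y : Pt) => t • y = y)
          (Finset.univ.filter fun t : X => t ∈ invol X) y).card = invFix X x x := by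
      intro y _
      obtain ⟨g, rfl⟩ := MulAction.exists_smul_eq X x y
      rw [← invFix_smul (MulAut.conj g) (MulAction.toPerm g) (by simp [mul_smul]) x x, invFix,
        Nat.card_eq_fintype_card, Fintype.card_subtype, Finset.bipartiteBelow,
        Finset.filter_filter]
      simp
    rw [Finset.sum_congr rfl e1, Finset.sum_congr rfl e2] at h
    simpa [Nat.card_eq_fintype_card, Fintype.card_subtype] using h
  · have h := Finset.sum_card_bipartiteAbove_eq_sum_card_bipartiteBelow
      (s := Finset.univ.filter fun t : X => t ∈ invol X ∧ t • x = x)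
      (t := (Finset.univ : Finset Pt)) (r := fun t y => t • y = y)
    have e1 : ∀ t ∈ Finset.univ.filter (fun t : X => t ∈ invol X ∧ t • x = x),
        (Finset.bipartiteAbove (fun (t : X) y => t • y = y) (Finset.univ : Finset Pt) t).card
          = m :=
      fun t ht => hm t (Finset.mem_filter.1 ht).2.1
    have e2 : ∀ y ∈ (Finset.univ : Finset Pt),
        (Finset.bipartiteBelow (fun (t : X) (y : Pt) => t • y = y)
          (Finset.univ.filter fun t : X => t ∈ invol X ∧ t • x = x) y).card = invFix X x y := by
      intro y _
      rw [invFix, Nat.card_eq_fintype_card, Fintype.card_subtype, Finset.bipartiteBelow,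
        Finset.filter_filter]
      simp [and_assoc]
    have e3 : (Finset.univ.filter fun t : X => t ∈ invol X ∧ t • x = x).card = invFix X x x := by
      rw [invFix, Nat.card_eq_fintype_card, Fintype.card_subtype]
      simp
    rw [Finset.sum_congr rfl e1, Finset.sum_congr rfl e2, Finset.sum_const, e3,
      smul_eq_mul] at h
    exact h.symm

end Involutions

/-! ### The arithmetic -/

/-- The numerical contradiction, with `s = r / 3`. -/
lemma arith_false (n v k s : ℕ) (hn : 2 ≤ n) (hodd : Odd n) (hv : 2 * v = n * (n ^ 2 + 1))
    (hk : 2 < k) (hs : s * (k - 1) = v - 1) (hdvd : s ∣ n ^ 2 * (n - 1)) (hkr : k ≤ 3 * s) :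
    False := by
  obtain ⟨m, rfl⟩ : ∃ m, n = m + 1 := ⟨n - 1, by omega⟩
  obtain ⟨j, rfl⟩ : ∃ j, k = j + 1 := ⟨k - 1, by omega⟩
  have hv1 : 1 ≤ v := by
    by_contra h
    obtain rfl : v = 0 := by omega
    have : 0 < (m + 1) * ((m + 1) ^ 2 + 1) := by positivity
    omega
  obtain ⟨u, rfl⟩ : ∃ u, v = u + 1 := ⟨v - 1, by omega⟩
  simp only [Nat.add_sub_cancel] at hs hdvd
  have hu : 2 * u + 2 = (m + 1) * ((m + 1) ^ 2 + 1) := by omega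
  -- A common divisor of `s ∣ v - 1` and `n` divides `2`, and `n` is odd.
  have hcop : Nat.Coprime s (m + 1) := by
    have hg1 : Nat.gcd s (m + 1) ∣ 2 := by
      have a : Nat.gcd s (m + 1) ∣ 2 * u :=
        ((Nat.gcd_dvd_left _ _).trans (Dvd.intro _ hs)).mul_left 2
      have b : Nat.gcd s (m + 1) ∣ 2 * u + 2 := by
        rw [hu]; exact (Nat.gcd_dvd_right _ _).mul_right _
      exact (Nat.dvd_add_right a).1 b
    have hg2 : Nat.Coprime (Nat.gcd s (m + 1)) 2 := by
      rw [Nat.coprime_two_right]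
      exact Odd.of_dvd_nat hodd (Nat.gcd_dvd_right _ _)
    exact hg2.eq_one_of_dvd hg1
  have hsm : s ∣ m := (hcop.pow_right 2).dvd_of_dvd_mul_left hdvd
  have hle : s ≤ m := Nat.le_of_dvd (by omega) hsm
  -- `v - 1 = s (k - 1) < 3 s² ≤ 3 (n - 1)²`, whereas `2 (v - 1) = (n - 1) (n² + n + 2)`.
  have h1 : s * j + s ≤ 3 * (m * m) := by nlinarith
  have h2 : 2 * u = m * (m * m + 3 * m + 4) := by nlinarith
  have hm : 1 ≤ m := by omega
  have hs0 : 0 < s := by omega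
  have h3 : m * (m * m + 3 * m + 4) < m * (6 * m) := by
    rw [← h2, ← hs]; linarith
  have h4 := Nat.lt_of_mul_lt_mul_left h3
  zify at h4
  nlinarith [sq_nonneg (2 * (m : ℤ) - 3)]

end FT

/-- In the setting of a non-trivial, non-symmetric flag-transitive,
point-primitive `2-(v,k,3)` design with `3 ∣ r`, almost simple automorphism group `G` with
socle `X ≅ PSL(2,q)` acting point-primitively with maximal point stabilizer `X_α`:
the stabilizer `X_α` is not isomorphic to `PGL(2,q₀)` with `q = q₀²` odd. -/
theorem stmt_9
    (q : ℕ) (hq4 : 4 ≤ q)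
    (F : Type) [Field F] [Fintype F] (hF : Fintype.card F = q)
    {Pt : Type*} [Fintype Pt] {G : Type*} [Group G] [MulAction G Pt] [FaithfulSMul G Pt]
    -- `D = (Pt, 𝓑)` is a non-trivial, non-symmetric `2-(v,k,3)` design …
    (𝓑 : Set (Set Pt)) (v k : ℕ) (hv : Nat.card Pt = v)
    (hD : IsDesign 𝓑 k 3) (hnt : 2 < k ∧ k < v - 1)
    (hnonsym : Nat.card 𝓑 ≠ v)
    -- … whose replication number `r` is divisible by 3, …
    (r : ℕ) (hr : ∀ x : Pt, repNum 𝓑 x = r) (h3r : 3 ∣ r)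
    -- … admitting the flag-transitive, point-primitive automorphism group `G`, …
    (hacts : ActsOn G 𝓑) (hflag : FlagTransitive G 𝓑)
    (hprim : PointPrimitive G Pt)
    -- … where `G` is almost simple with socle `X ≅ PSL(2,q)` (so `PSL(2,q) ⊴ G ≤ PΓL(2,q)`):
    (X : Subgroup G) (hXnormal : X.Normal)
    (hXiso : Nonempty (X ≃* PSL2 F))
    (hXcent : Subgroup.centralizer (X : Set G) = ⊥)
    -- `X` acts point-primitively on `D`, with maximal point stabilizer `X_α`:
    (hXprim : PointPrimitive X Pt)
    (α : Pt) (hmax : IsCoatom (MulAction.stabilizer X α))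
    :
    ∀ (q₀ : ℕ) (F₀ : Type) [Field F₀] [Fintype F₀], Fintype.card F₀ = q₀ →
      q = q₀ ^ 2 → Odd q →
      IsEmpty ((MulAction.stabilizer X α) ≃* PGL2 F₀) := by
  classical
  intro q₀ F₀ _ _ hF₀ hqq hodd
  refine ⟨fun e => ?_⟩
  obtain ⟨eX⟩ := hXiso
  have hq₀ : 2 ≤ q₀ := by rw [← hF₀]; exact Fintype.one_lt_card
  have hodd₀ : Odd q₀ := by
    rw [hqq] at hodd
    exact (Nat.odd_pow_iff two_ne_zero).1 hodd
  -- Both fields have odd characteristic and `q ≡ 1 (mod 4)`, so `-1` is a square in `F`.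
  have two_F : (2 : F) ≠ 0 := by
    apply Ring.two_ne_zero
    rw [Ne, FiniteField.even_card_iff_char_two, hF]
    rw [Nat.odd_iff] at hodd; omega
  have two_F₀ : (2 : F₀) ≠ 0 := by
    apply Ring.two_ne_zero
    rw [Ne, FiniteField.even_card_iff_char_two, hF₀]
    rw [Nat.odd_iff] at hodd₀; omega
  obtain ⟨i, hi⟩ : IsSquare (-1 : F) := by
    rw [FiniteField.isSquare_neg_one_iff, hF, hqq]
    obtain ⟨j, rfl⟩ := hodd₀
    have : (2 * j + 1) ^ 2 = 4 * (j * j + j) + 1 := by ring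
    omega
  have : Finite X := Finite.of_equiv _ eX.symm.toEquiv
  have : MulAction.IsPretransitive X Pt := hXprim.1
  have hX := card_PSL2 two_F
  have hiX := card_invol_PSL2 two_F i hi.symm
  rw [← Nat.card_congr eX.toEquiv, hF, hqq] at hX
  rw [← card_invol_congr eX, hF, hqq] at hiX
  have hH := card_PGL2 (K := F₀)
  rw [← Nat.card_congr e.toEquiv, hF₀] at hH
  have hiH := card_invol_PGL2 two_F₀
  rw [← card_invol_congr e, ← invFix_self, hF₀] at hiH
  have hvF : Fintype.card Pt = v := by rw [← hv, Nat.card_eq_fintype_card]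
  have horb : Nat.card X = v * Nat.card (MulAction.stabilizer X α) := by
    rw [← hv, ← MulAction.index_stabilizer_of_transitive X α, Subgroup.index_mul_card]
  have hv2 : 2 * v = q₀ * (q₀ ^ 2 + 1) := by
    rw [horb, hH] at hX
    obtain ⟨m, rfl⟩ : ∃ m, q₀ = m + 1 := ⟨q₀ - 1, by omega⟩
    have e1 : (m + 1) ^ 2 - 1 = m * (m + 2) := by
      have : (m + 1) ^ 2 = m * (m + 2) + 1 := by ring
      omega
    rw [e1, Nat.add_sub_cancel] at hX
    have hm : 0 < (m + 1) * m * (m + 1 + 1) := by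
      have : 0 < m := by omega
      positivity
    apply Nat.eq_of_mul_eq_mul_right hm
    linarith
  have hconj : ∀ s t : X, s ∈ invol X → t ∈ invol X → IsConj s t := by
    intro s t hs ht
    have h := isConj_invol_PSL2 two_F i hi.symm (eX s) (eX t)
      ((mem_invol_map eX s).2 hs) ((mem_invol_map eX t).2 ht)
    simpa using eX.symm.toMonoidHom.map_isConj h
  obtain ⟨m, hm1, hm2⟩ := invFix_count hconj α
  -- Every involution of `X` fixes exactly `q₀` points.
  have hm : m = q₀ := by
    rw [hiH, hvF] at hm1
    have hpos : 0 < q₀ ^ 2 * (q₀ ^ 2 + 1) := by positivity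
    apply Nat.eq_of_mul_eq_mul_left hpos
    calc q₀ ^ 2 * (q₀ ^ 2 + 1) * m = 2 * (Nat.card (invol X) * m) := by rw [← hiX]; ring
      _ = (2 * v) * q₀ ^ 2 := by rw [hm1]; ring
      _ = q₀ ^ 2 * (q₀ ^ 2 + 1) * q₀ := by rw [hv2]; ring
  have hsum : ∑ y : Pt with y ≠ α, invFix X α y = q₀ ^ 2 * (q₀ - 1) := by
    have h := Finset.add_sum_erase Finset.univ (fun y => invFix X α y) (Finset.mem_univ α)
    rw [hm2, hm, hiH] at h
    rw [Finset.filter_ne']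
    obtain ⟨m, rfl⟩ : ∃ m, q₀ = m + 1 := ⟨q₀ - 1, by omega⟩
    simp only [Nat.add_sub_cancel]
    linarith
  have hinv : ∀ g : G, g • α = α → ∀ y, invFix X α (g • y) = invFix X α y := by
    intro g hg y
    have h := invFix_smul (X := X) (MulAut.conjNormal g) (MulAction.toPerm g) (by
      intro t y
      simp [Subgroup.smul_def, mul_smul]) α y
    simpa [hg] using h
  have hdvd := hD.rep_dvd hflag α (invFix X α) hinv
  rw [hr, hsum] at hdvd
  obtain ⟨s, rfl⟩ := h3r
  have hdvd' : s ∣ q₀ ^ 2 * (q₀ - 1) := Nat.dvd_of_mul_dvd_mul_left (by norm_num) hdvd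
  have hrep := hD.rep_mul α
  rw [hr, hvF] at hrep
  have hs : s * (k - 1) = v - 1 := by
    rw [mul_assoc] at hrep
    exact Nat.eq_of_mul_eq_mul_left (by norm_num) hrep
  obtain ⟨hk2, hkv⟩ := hnt
  have hs1 : 1 < s := by
    by_contra h
    have : s * (k - 1) ≤ 1 * (k - 1) := Nat.mul_le_mul_right _ (by omega)
    omega
  have hb := hD.fisher hr (by omega)
  have hbk := hD.card_mul hr
  have hkr : k ≤ 3 * s := by
    have h := Nat.mul_le_mul_right k hb
    rw [hbk] at h
    refine Nat.le_of_mul_le_mul_left h ?_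
    omega
  exact arith_false q₀ v k s hq₀ hodd₀ hv2 hk2 hs hdvd' hkr
end

section
/- Let D be a non-trivial, non-symmetric 2-(v,k,3) design with 3 dividing r, admitting a flag-transitive, point-primitive automorphism group G that is almost simple with socle X = PSL(2,q), where X acts point-primitively on D with point stabilizer X_α maximal in X. Suppose X_α ≅ A4, with q = p a prime, p ≡ ±3 (mod 8) and p ≢ ±1 (mod 10). Then q = 5 and D is the complete 2-(5,3,3) design, whose blocks are all 3-subsets of a 5-point set (so (v,b,r,k) = (5,10,6,3)). -/
/-!
The point stabilizer in `X ≅ PSL(2,p)` is `A₄`, so `24 v = p (p² - 1)`. Since `C_G(X) = 1`, the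
group `G` embeds in `Aut X`, whose order is at most `|PGL(2,p)| = 2 |X|` (`card_aut_PSL`); hence
`|G_α|` is `12` or `24`. Flag-transitivity makes `r` a divisor of `|G_α|`
(`rep_dvd_card_stabilizer`), so `r ∣ 24`. With `r (k - 1) = 3 (v - 1)` and Fisher's inequality
`k ≤ r` (`fisher`) this gives `3 (v - 1) ≤ 24 · 23`, so `p < 19`, and the congruences leave
`p = 5` and `p = 13`. For `p = 13` one has `v = 91` and `r (k - 1) = 270` with `k ≤ r`, which no
divisor `r` of `24` allows. For `p = 5` one has `v = 5`, so `k = 3`, `r = 6`, `b = 10`, and the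
blocks are all the `3`-subsets.

The bound on `Aut PSL(2,p)`: an automorphism `σ` sends the standard unipotents `u`, `w` to elements
of order `p`, which lift to unipotents `1 + N`, `1 + M`. The involution `u w⁻¹ u` goes to an
involution, whose lift has trace zero, and this says `tr (N M) = 1`. Such a pair of nilpotents is
`GL(2,p)`-conjugate to `(E₁₂, E₂₁)`. As `u` and `w` generate, `σ` is determined by the conjugating
matrix, which may be rescaled freely, so `|Aut PSL(2,p)| · (p - 1) ≤ |GL(2,p)|`.
-/

open scoped Pointwise
open Matrix

open FT

/-! ### The automorphism group of `PSL(2,p)` -/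

section PSL

variable {F : Type} [Field F]

/-- The upper unipotent generator of `SL(2,F)`. -/
def uSL (F : Type) [Field F] : Matrix.SpecialLinearGroup (Fin 2) F :=
  ⟨!![1, 1; 0, 1], by simp [det_fin_two]⟩

/-- The lower unipotent generator of `SL(2,F)`. -/
def wSL (F : Type) [Field F] : Matrix.SpecialLinearGroup (Fin 2) F :=
  ⟨!![1, 0; 1, 1], by simp [det_fin_two]⟩

/-- The Weyl element of `SL(2,F)`. -/
def sSL (F : Type) [Field F] : Matrix.SpecialLinearGroup (Fin 2) F :=
  ⟨!![0, 1; -1, 0], by simp [det_fin_two]⟩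

lemma uSL_coe : (uSL F).1 = !![1, 1; 0, 1] := rfl

lemma wSL_coe : (wSL F).1 = !![1, 0; 1, 1] := rfl

lemma sSL_coe : (sSL F).1 = !![0, 1; -1, 0] := rfl

/-- The projection `SL(2,F) → PSL(2,F)`. -/
def projPSL (F : Type) [Field F] : Matrix.SpecialLinearGroup (Fin 2) F →* PSL2 F :=
  QuotientGroup.mk' _

lemma projPSL_surjective : Function.Surjective (projPSL F) :=
  QuotientGroup.mk'_surjective _

lemma projPSL_eq_one_iff (A : Matrix.SpecialLinearGroup (Fin 2) F) :
    projPSL F A = 1 ↔ A.1 = 1 ∨ A.1 = -1 := by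
  have h1 : projPSL F A = 1 ↔ A ∈ Subgroup.center (Matrix.SpecialLinearGroup (Fin 2) F) :=
    QuotientGroup.eq_one_iff A
  rw [h1, Matrix.SpecialLinearGroup.mem_center_iff]
  constructor
  · rintro ⟨r, hr, hA⟩
    rw [Fintype.card_fin, sq_eq_one_iff] at hr
    rcases hr with rfl | rfl
    · left; rw [← hA, map_one]
    · right; rw [← hA, map_neg, map_one]
  · rintro (h | h)
    · exact ⟨1, by simp, by rw [h, map_one]⟩
    · exact ⟨-1, by simp, by rw [h, map_neg, map_one]⟩

lemma pow_succ_of_det_zero (N : Matrix (Fin 2) (Fin 2) F) (h : N.det = 0) (n : ℕ) :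
    N ^ (n + 1) = N.trace ^ n • N := by
  have hsq : N * N = N.trace • N := by
    rw [det_fin_two] at h
    ext i j
    fin_cases i <;> fin_cases j <;>
      simp [Matrix.mul_apply, Fin.sum_univ_two, trace_fin_two] <;> grind
  induction n with
  | zero => simp
  | succ n ih => rw [_root_.pow_succ, ih, smul_mul_assoc, hsq, smul_smul, ← _root_.pow_succ]

/-- A `2 × 2` nilpotent matrix has vanishing trace and determinant. -/
lemma nilpotent_fin_two (N : Matrix (Fin 2) (Fin 2) F) {n : ℕ} (h : N ^ n = 0) :
    N.trace = 0 ∧ N.det = 0 := by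
  have hn : N ^ (n + 1) = 0 := by rw [_root_.pow_succ, h, zero_mul]
  have hdet : N.det = 0 := by
    have := congrArg det hn
    rw [det_pow, det_zero] at this
    exact pow_eq_zero_iff (by omega) |>.1 this
  refine ⟨?_, hdet⟩
  rw [pow_succ_of_det_zero N hdet] at hn
  rcases smul_eq_zero.1 hn with h0 | h0
  · exact eq_zero_of_pow_eq_zero h0
  · simp [h0]

/-- In odd characteristic `p`, an element of `PSL(2,F)` killed by `p` lifts to a unipotent
matrix: of the two lifts `±A`, one satisfies `A ^ p = 1`, hence `(A - 1) ^ p = 0`. -/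
lemma exists_unipotent_lift {p : ℕ} [Fact p.Prime] [CharP F p] (hodd : Odd p)
    (x : PSL2 F) (hx : x ^ p = 1) :
    ∃ A : Matrix.SpecialLinearGroup (Fin 2) F, projPSL F A = x ∧
      (A.1 - 1).trace = 0 ∧ (A.1 - 1).det = 0 := by
  have key : ∀ A : Matrix.SpecialLinearGroup (Fin 2) F, A.1 ^ p = 1 →
      (A.1 - 1).trace = 0 ∧ (A.1 - 1).det = 0 := by
    intro A hA
    apply nilpotent_fin_two (n := p)
    rw [sub_pow_char_of_commute (p := p) (Commute.one_right _), hA, one_pow, sub_self]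
  obtain ⟨A, rfl⟩ := projPSL_surjective x
  rw [← map_pow, projPSL_eq_one_iff] at hx
  rcases hx with h | h
  · exact ⟨A, rfl, key A (by simpa using h)⟩
  · refine ⟨-A, ?_, key (-A) ?_⟩
    · rw [← mul_inv_eq_one, ← map_inv, ← map_mul, projPSL_eq_one_iff]
      right
      have : -A * A⁻¹ = -1 := by rw [neg_mul, mul_inv_cancel]
      rw [this]; simp
    · have h' : A.1 ^ p = -1 := by simpa using h
      simp [hodd.neg_pow, h']

/-- Two `2 × 2` nilpotent matrices with `tr (N M) = 1` are simultaneously conjugate to the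
matrix units `E₁₂` and `E₂₁`. The first column of the conjugating matrix is a nonzero column of
`N`, the second one its image under `M`. -/
lemma exists_conj_units (N M : Matrix (Fin 2) (Fin 2) F) (hN : N.trace = 0) (hNdet : N.det = 0)
    (hM : M.trace = 0) (hMdet : M.det = 0) (h : (N * M).trace = 1) :
    ∃ g : GL (Fin 2) F, N * g.1 = g.1 * !![0, 1; 0, 0] ∧ M * g.1 = g.1 * !![0, 0; 1, 0] := by
  obtain ⟨a, b, c, d, rfl⟩ : ∃ a b c d, N = !![a, b; c, d] := ⟨_, _, _, _, eta_fin_two N⟩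
  obtain ⟨a', b', c', d', rfl⟩ : ∃ a b c d, M = !![a, b; c, d] := ⟨_, _, _, _, eta_fin_two M⟩
  simp only [trace_fin_two_of, det_fin_two_of, mul_fin_two] at hN hNdet hM hMdet h
  obtain rfl : d = -a := by linear_combination hN
  obtain rfl : d' = -a' := by linear_combination hM
  by_cases hb : b = 0
  · subst hb
    have ha : a = 0 := by
      have : a ^ 2 = 0 := by linear_combination -hNdet
      exact eq_zero_of_pow_eq_zero this
    subst ha
    have hc : c ≠ 0 := by rintro rfl; simp at h
    refine ⟨GeneralLinearGroup.mkOfDetNeZero !![0, b' * c; c, -a' * c] ?_, ?_, ?_⟩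
    · rw [det_fin_two_of]
      intro h0
      apply hc
      linear_combination (-c) * h - h0
    · ext i j
      fin_cases i <;> fin_cases j <;>
        simp [GeneralLinearGroup.mkOfDetNeZero, Matrix.mul_apply, Fin.sum_univ_two]
      linear_combination c * h
    · ext i j
      fin_cases i <;> fin_cases j <;>
        simp [GeneralLinearGroup.mkOfDetNeZero, Matrix.mul_apply, Fin.sum_univ_two]
      · ring
      · linear_combination (-c) * hMdet
  · refine ⟨GeneralLinearGroup.mkOfDetNeZero
      !![b, a' * b - b' * a; -a, c' * b + a' * a] ?_, ?_, ?_⟩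
    · rw [det_fin_two_of]
      intro h0
      apply hb
      linear_combination (-b) * h + h0 - b' * hNdet
    · ext i j
      fin_cases i <;> fin_cases j <;>
        simp [GeneralLinearGroup.mkOfDetNeZero, Matrix.mul_apply, Fin.sum_univ_two]
      · ring
      · linear_combination b * h + b' * hNdet
      · linear_combination -hNdet
      · linear_combination (-a) * h - a' * hNdet
    · ext i j
      fin_cases i <;> fin_cases j <;>
        simp [GeneralLinearGroup.mkOfDetNeZero, Matrix.mul_apply, Fin.sum_univ_two]
      · ring
      · linear_combination (-b) * hMdet
      · linear_combination a * hMdet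

/-- Every automorphism of `PSL(2,p)` acts on the two unipotent generators as conjugation by some
`g ∈ GL(2,p)`: the images lift to unipotents `1 + N`, `1 + M`, and since the Weyl element
`u w⁻¹ u` is an involution of `PSL(2,p)`, its image has trace `2 - 2 tr (N M) = 0`. -/
lemma exists_conj_of_aut {p : ℕ} [Fact p.Prime] [CharP F p] (hodd : Odd p)
    (σ : MulAut (PSL2 F)) :
    ∃ (g : GL (Fin 2) F) (A B : Matrix.SpecialLinearGroup (Fin 2) F),
      projPSL F A = σ (projPSL F (uSL F)) ∧ projPSL F B = σ (projPSL F (wSL F)) ∧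
      A.1 * g.1 = g.1 * (uSL F).1 ∧ B.1 * g.1 = g.1 * (wSL F).1 := by
  have h2 : (2 : F) ≠ 0 := by
    intro h
    have : ((2 : ℕ) : F) = 0 := by exact_mod_cast h
    rw [CharP.cast_eq_zero_iff F p] at this
    have := (Nat.prime_dvd_prime_iff_eq (Fact.out : p.Prime) Nat.prime_two).1 this
    subst this
    exact absurd hodd (by decide)
  have hup : ∀ n : ℕ, (uSL F).1 ^ n = !![1, (n : F); 0, 1] := by
    intro n
    induction n with
    | zero => simp [one_fin_two]
    | succ n ih => rw [_root_.pow_succ, ih]; simp [uSL, add_comm]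
  have hwp : ∀ n : ℕ, (wSL F).1 ^ n = !![1, 0; (n : F), 1] := by
    intro n
    induction n with
    | zero => simp [one_fin_two]
    | succ n ih => rw [_root_.pow_succ, ih]; simp [wSL]
  have hu1 : (σ (projPSL F (uSL F))) ^ p = 1 := by
    rw [← map_pow, ← map_pow]
    have : (uSL F) ^ p = 1 := Subtype.ext (by simpa [one_fin_two] using hup p)
    simp [this]
  have hw1 : (σ (projPSL F (wSL F))) ^ p = 1 := by
    rw [← map_pow, ← map_pow]
    have : (wSL F) ^ p = 1 := Subtype.ext (by simpa [one_fin_two] using hwp p)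
    simp [this]
  obtain ⟨A, hA, hA1, hA2⟩ := exists_unipotent_lift hodd _ hu1
  obtain ⟨B, hB, hB1, hB2⟩ := exists_unipotent_lift hodd _ hw1
  have hs : uSL F * (wSL F)⁻¹ * uSL F = sSL F := by
    apply Subtype.ext
    rw [Matrix.SpecialLinearGroup.coe_mul, Matrix.SpecialLinearGroup.coe_mul,
      Matrix.SpecialLinearGroup.coe_inv, adjugate_fin_two, uSL_coe, wSL_coe, sSL_coe]
    simp
  have hσs : projPSL F (A * B⁻¹ * A) = σ (projPSL F (uSL F * (wSL F)⁻¹ * uSL F)) := by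
    simp only [map_mul, map_inv, hA, hB]
  have hsq : projPSL F ((A * B⁻¹ * A) * (A * B⁻¹ * A)) = 1 := by
    rw [map_mul, hσs, ← map_mul, ← map_mul, hs, MulEquiv.map_eq_one_iff, projPSL_eq_one_iff]
    right
    rw [Matrix.SpecialLinearGroup.coe_mul, sSL_coe]
    simp [one_fin_two]
  have hne : projPSL F (A * B⁻¹ * A) ≠ 1 := by
    rw [hσs, hs, Ne, MulEquiv.map_eq_one_iff, projPSL_eq_one_iff]
    rintro (h | h)
    · have := congrFun (congrFun h 0) 1; simp [sSL_coe] at this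
    · have := congrFun (congrFun h 0) 1; simp [sSL_coe] at this
  have htr : (A * B⁻¹ * A).1.trace = 0 := by
    generalize A * B⁻¹ * A = S at hsq hne
    rw [projPSL_eq_one_iff] at hsq
    rw [Ne, projPSL_eq_one_iff] at hne
    have hdet := S.2
    have hch : S.1 * S.1 = S.1.trace • S.1 - 1 := by
      rw [det_fin_two] at hdet
      ext i j
      fin_cases i <;> fin_cases j <;>
        simp [Matrix.mul_apply, Fin.sum_univ_two, trace_fin_two] <;> grind
    by_contra ht
    rw [Matrix.SpecialLinearGroup.coe_mul, hch] at hsq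
    rcases hsq with h | h
    -- `S ^ 2 = 1` with `tr S ≠ 0` makes `S` a scalar `c`, and `c ^ 2 = det S = 1`.
    · have hS : S.1 = (S.1.trace⁻¹ * 2) • (1 : Matrix (Fin 2) (Fin 2) F) := by
        have : S.1.trace • S.1 = (2 : F) • (1 : Matrix (Fin 2) (Fin 2) F) := by
          rw [sub_eq_iff_eq_add] at h
          rw [h, two_smul]
        rw [mul_smul, ← this, smul_smul, inv_mul_cancel₀ ht, one_smul]
      apply hne
      generalize S.1.trace⁻¹ * 2 = c at hS
      rw [hS, det_smul, det_one, Fintype.card_fin, mul_one, sq_eq_one_iff] at hdet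
      rw [hS]
      rcases hdet with rfl | rfl <;> simp
    · have : S.1.trace • S.1 = 0 := by
        rw [sub_eq_iff_eq_add] at h
        rw [h]; simp
      rcases smul_eq_zero.1 this with h | h
      · exact ht h
      · apply ht; rw [h, trace_zero]
  have hNM : ((A.1 - 1) * (B.1 - 1)).trace = 1 := by
    rw [Matrix.SpecialLinearGroup.coe_mul, Matrix.SpecialLinearGroup.coe_mul,
      Matrix.SpecialLinearGroup.coe_inv,
      adjugate_fin_two] at htr
    have hdA := A.2
    have hdB := B.2
    generalize A.1 = A at *
    generalize B.1 = B at *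
    obtain ⟨a, b, c, d, rfl⟩ : ∃ a b c d, A = !![a, b; c, d] := ⟨_, _, _, _, eta_fin_two A⟩
    obtain ⟨a', b', c', d', rfl⟩ : ∃ a b c d, B = !![a, b; c, d] := ⟨_, _, _, _, eta_fin_two B⟩
    simp [one_fin_two, trace_fin_two, det_fin_two] at *
    obtain rfl : d = 2 - a := by linear_combination hA1
    obtain rfl : d' = 2 - a' := by linear_combination hB1
    apply mul_left_cancel₀ h2
    linear_combination -htr + (-2 : F) * hdA
  obtain ⟨g, hg1, hg2⟩ := exists_conj_units _ _ hA1 hA2 hB1 hB2 hNM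
  have e1 : (uSL F).1 = !![0, 1; 0, 0] + 1 := by simp [uSL, one_fin_two]
  have e2 : (wSL F).1 = !![0, 0; 1, 0] + 1 := by simp [wSL, one_fin_two]
  refine ⟨g, A, B, hA, hB, ?_, ?_⟩
  · rw [e1, mul_add, mul_one, ← hg1, sub_mul, one_mul, sub_add_cancel]
  · rw [e2, mul_add, mul_one, ← hg2, sub_mul, one_mul, sub_add_cancel]

/-- Over a prime field the two unipotents generate `SL(2,p)`. -/
lemma closure_uw (hcast : ∀ t : F, ∃ n : ℕ, (n : F) = t) :
    Subgroup.closure {uSL F, wSL F} = ⊤ := by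
  have hup : ∀ n : ℕ, ((uSL F) ^ n).1 = !![1, (n : F); 0, 1] := by
    intro n
    induction n with
    | zero => simp [one_fin_two]
    | succ n ih => rw [_root_.pow_succ, Matrix.SpecialLinearGroup.coe_mul, ih]; simp [uSL, add_comm]
  have hwp : ∀ n : ℕ, ((wSL F) ^ n).1 = !![1, 0; (n : F), 1] := by
    intro n
    induction n with
    | zero => simp [one_fin_two]
    | succ n ih => rw [_root_.pow_succ, Matrix.SpecialLinearGroup.coe_mul, ih]; simp [wSL]
  have hu : uSL F ∈ Subgroup.closure {uSL F, wSL F} := Subgroup.subset_closure (by simp)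
  have hw : wSL F ∈ Subgroup.closure {uSL F, wSL F} := Subgroup.subset_closure (by simp)
  -- A matrix with nonzero lower left entry `c` is an upper-lower-upper product.
  have main : ∀ A : Matrix.SpecialLinearGroup (Fin 2) F, A.1 1 0 ≠ 0 →
      A ∈ Subgroup.closure {uSL F, wSL F} := by
    intro A hc
    obtain ⟨l, hl⟩ := hcast ((A.1 0 0 - 1) / A.1 1 0)
    obtain ⟨m, hm⟩ := hcast (A.1 1 0)
    obtain ⟨n, hn⟩ := hcast ((A.1 1 1 - 1) / A.1 1 0)
    have : A = uSL F ^ l * wSL F ^ m * uSL F ^ n := by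
      apply Subtype.ext
      rw [Matrix.SpecialLinearGroup.coe_mul, Matrix.SpecialLinearGroup.coe_mul, hup, hwp, hup, hl, hm, hn]
      have hd := A.2
      rw [det_fin_two] at hd
      ext i j
      fin_cases i <;> fin_cases j <;> simp <;> field_simp <;>
        grind
    rw [this]
    exact mul_mem (mul_mem (pow_mem hu _) (pow_mem hw _)) (pow_mem hu _)
  refine eq_top_iff.2 fun A _ => ?_
  by_cases hc : A.1 1 0 = 0
  · have hd := A.2
    rw [det_fin_two, hc] at hd
    have h00 : A.1 0 0 ≠ 0 := by intro h; simp [h] at hd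
    have := main (wSL F * A) (by
      rw [Matrix.SpecialLinearGroup.coe_mul, wSL_coe]
      simp [Matrix.mul_apply, Fin.sum_univ_two, hc, h00])
    have h3 := mul_mem (inv_mem hw) this
    rwa [inv_mul_cancel_left] at h3
  · exact main A hc

lemma card_PSL_two (h2 : (2 : F) ≠ 0) :
    Nat.card (PSL2 F) * 2 = Nat.card (Matrix.SpecialLinearGroup (Fin 2) F) := by
  have hk : Nat.card (Subgroup.center (Matrix.SpecialLinearGroup (Fin 2) F)) = 2 := by
    rw [Nat.card_congr (Matrix.SpecialLinearGroup.center_equiv_rootsOfUnity' (0 : Fin 2)).toEquiv,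
      Fintype.card_fin]
    apply IsPrimitiveRoot.card_rootsOfUnity (ζ := (-1 : F))
    apply IsPrimitiveRoot.mk_of_lt _ (by norm_num) (by norm_num)
    intro l h1 h3
    obtain rfl : l = 1 := by omega
    intro h
    apply h2
    linear_combination -h
  have h := Subgroup.card_eq_card_quotient_mul_card_subgroup
    (Subgroup.center (Matrix.SpecialLinearGroup (Fin 2) F))
  rw [hk] at h
  exact h.symm

variable [Fintype F]

lemma card_GL_two {p : ℕ} (hF : Fintype.card F = p) :
    Nat.card (GL (Fin 2) F) = (p ^ 2 - 1) * (p ^ 2 - p) := by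
  classical
  rw [Matrix.card_GL_field, hF, Fin.prod_univ_two]; simp

lemma card_SL_two {p : ℕ} (hF : Fintype.card F = p) :
    Nat.card (Matrix.SpecialLinearGroup (Fin 2) F) * (p - 1) = (p ^ 2 - 1) * (p ^ 2 - p) := by
  classical
  have hk : Nat.card (Matrix.SpecialLinearGroup (Fin 2) F) =
      Nat.card (GeneralLinearGroup.det (n := Fin 2) (R := F)).ker := by
    have := Matrix.SpecialLinearGroup.range_toGL (n := Fin 2) (A := F)
    have e := Nat.card_congr (Equiv.ofInjective _
      (Matrix.SpecialLinearGroup.toGL_injective (n := Fin 2) (R := F)))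
    rw [e]
    apply Nat.card_congr
    apply Equiv.setCongr
    rw [this]; rfl
  rw [hk, ← card_GL_two hF, ← Subgroup.card_mul_index
    (GeneralLinearGroup.det (n := Fin 2) (R := F)).ker, Subgroup.index_ker,
    MonoidHom.range_eq_top.2 GeneralLinearGroup.det_surjective, Subgroup.card_top,
    Nat.card_eq_fintype_card (α := Fˣ), Fintype.card_units, hF]

/-- `|Aut PSL(2,p)| ≤ |PGL(2,p)|`. The pairs `(σ, t)` with `σ` an automorphism and `t ∈ Fˣ` inject
into `GL(2,p)` by `(σ, t) ↦ t g_σ`, where `g_σ` induces `σ` on the two unipotent generators. -/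
lemma card_aut_PSL {p : ℕ} [hp : Fact p.Prime] (hF : Fintype.card F = p) (hodd : Odd p) :
    Finite (MulAut (PSL2 F)) ∧
    Nat.card (MulAut (PSL2 F)) * (p - 1) ≤ (p ^ 2 - 1) * (p ^ 2 - p) := by
  classical
  have : CharP F p := charP_of_card_eq_prime hF
  have hcast : ∀ t : F, ∃ n : ℕ, (n : F) = t := by
    intro t
    obtain ⟨z, hz⟩ := (ZMod.ringEquivOfPrime F hp.out hF).surjective t
    refine ⟨z.val, ?_⟩
    rw [← hz, ← map_natCast (ZMod.ringEquivOfPrime F hp.out hF), ZMod.natCast_zmod_val]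
  have hfin : Finite (MulAut (PSL2 F)) :=
    Finite.of_injective (fun σ : MulAut (PSL2 F) => (σ : PSL2 F → PSL2 F)) DFunLike.coe_injective
  refine ⟨hfin, ?_⟩
  choose g A B hA hB hgA hgB using exists_conj_of_aut (F := F) hodd
  have hcancel : ∀ (g : GL (Fin 2) F) (C D : Matrix (Fin 2) (Fin 2) F),
      C * g.1 = D * g.1 → C = D := fun g C D h => (Units.mul_left_inj g).1 h
  let f : MulAut (PSL2 F) × Fˣ → GL (Fin 2) F := fun x => x.2 • g x.1
  have hinj : Function.Injective f := by
    rintro ⟨σ, s⟩ ⟨τ, t⟩ h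
    have h0 : (s : F) • (g σ).1 = (t : F) • (g τ).1 := congrArg Units.val h
    have h1 : (g σ).1 = ((s⁻¹ * t : Fˣ) : F) • (g τ).1 := by
      rw [Units.val_mul, mul_smul, ← h0, smul_smul, Units.inv_mul, one_smul]
    have hunit : ((s⁻¹ * t : Fˣ) : F) ≠ 0 := Units.ne_zero _
    have eA : A σ = A τ := by
      apply Subtype.ext
      apply hcancel (g σ)
      rw [hgA, h1, smul_mul_assoc, ← hgA, mul_smul_comm]
    have eB : B σ = B τ := by
      apply Subtype.ext
      apply hcancel (g σ)
      rw [hgB, h1, smul_mul_assoc, ← hgB, mul_smul_comm]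
    have hst : σ = τ := by
      have hhom : (σ.toMonoidHom.comp (projPSL F)) = (τ.toMonoidHom.comp (projPSL F)) := by
        apply MonoidHom.eq_of_eqOn_dense (closure_uw hcast)
        rintro x (rfl | rfl)
        · exact (hA σ).symm.trans ((congrArg _ eA).trans (hA τ))
        · exact (hB σ).symm.trans ((congrArg _ eB).trans (hB τ))
      apply MulEquiv.ext
      intro x
      obtain ⟨y, rfl⟩ := projPSL_surjective x
      exact DFunLike.congr_fun hhom y
    subst hst
    have hs : (s : F) = t := by
      by_contra hne
      have hz : ((s : F) - t) • (g σ).1 = 0 := by rw [sub_smul, h0, sub_self]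
      rcases smul_eq_zero.1 hz with h | h
      · exact hne (sub_eq_zero.1 h)
      · exact (g σ).ne_zero h
    rw [Units.ext hs]
  have := Nat.card_le_card_of_injective f hinj
  rwa [Nat.card_prod, card_GL_two hF, Nat.card_eq_fintype_card (α := Fˣ), Fintype.card_units,
    hF] at this

end PSL

/-! ### Parameters of flag-transitive designs -/

section Design

variable {Pt : Type*} {𝓑 : Set (Set Pt)} {k r : ℕ}

open Classical in
/-- The incidence matrix of the design, with rational entries. -/
noncomputable def inc (𝓑 : Set (Set Pt)) (x : Pt) (B : 𝓑) : ℚ := if x ∈ B.1 then 1 else 0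

/-- The entries of `N Nᵀ` for the incidence matrix `N`. -/
lemma sum_inc_mul_inc [Fintype 𝓑] [DecidableEq Pt] (hD : IsDesign 𝓑 k 3)
    (hr : ∀ x : Pt, repNum 𝓑 x = r) (x y : Pt) :
    ∑ B : 𝓑, inc 𝓑 x B * inc 𝓑 y B = if x = y then (r : ℚ) else 3 := by
  classical
  have h1 : ∑ B : 𝓑, inc 𝓑 x B * inc 𝓑 y B =
      (Nat.card {B : Set Pt | B ∈ 𝓑 ∧ x ∈ B ∧ y ∈ B} : ℚ) := by
    have e : {B : Set Pt | B ∈ 𝓑 ∧ x ∈ B ∧ y ∈ B} ≃ {B : 𝓑 // x ∈ B.1 ∧ y ∈ B.1} :=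
      (Equiv.subtypeSubtypeEquivSubtypeInter (· ∈ 𝓑) (fun B => x ∈ B ∧ y ∈ B)).symm
    rw [Nat.card_congr e, Nat.card_eq_fintype_card, Fintype.card_subtype, Finset.card_filter]
    push_cast
    refine Finset.sum_congr rfl fun B _ => ?_
    by_cases hx : x ∈ B.1 <;> by_cases hy : y ∈ B.1 <;> simp [inc, hx, hy]
  rw [h1]
  split_ifs with h
  · subst h
    rw [← hr x, repNum]
    simp
  · rw [hD.pair_count x y h]; norm_num

lemma sum_inc_points [Fintype Pt] (hD : IsDesign 𝓑 k 3) (B : 𝓑) : ∑ x : Pt, inc 𝓑 x B = k := by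
  classical
  rw [← hD.block_card B.1 B.2, Nat.card_eq_fintype_card, Fintype.card_subtype,
    Finset.card_filter]
  push_cast
  rfl

/-- The relation `r (k - 1) = 3 (v - 1)`, without subtraction. -/
lemma design_rk [Fintype Pt] (hD : IsDesign 𝓑 k 3) (hr : ∀ x : Pt, repNum 𝓑 x = r) (x : Pt) :
    r * k + 3 = r + 3 * Nat.card Pt := by
  classical
  have := Fintype.ofFinite 𝓑
  have h1 : ∑ y : Pt, ∑ B : 𝓑, inc 𝓑 x B * inc 𝓑 y B = (r : ℚ) * k := by
    rw [Finset.sum_comm]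
    simp_rw [← Finset.mul_sum, sum_inc_points hD, ← Finset.sum_mul]
    have := sum_inc_mul_inc hD hr x x
    simp only [if_true] at this
    rw [← this]
    congr 1
    refine Finset.sum_congr rfl fun B _ => ?_
    unfold inc; split_ifs <;> simp
  simp_rw [sum_inc_mul_inc hD hr] at h1
  have h2 : ∀ y : Pt, (if x = y then (r : ℚ) else 3) = 3 + if x = y then (r : ℚ) - 3 else 0 := by
    intro y; split_ifs <;> ring
  simp_rw [h2, Finset.sum_add_distrib] at h1
  simp at h1
  have h3 : (r * k + 3 : ℚ) = r + 3 * Nat.card Pt := by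
    rw [← h1, Nat.card_eq_fintype_card]; ring
  exact_mod_cast h3

lemma design_vr [Fintype Pt] (hD : IsDesign 𝓑 k 3) (hr : ∀ x : Pt, repNum 𝓑 x = r) :
    Nat.card Pt * r = Nat.card 𝓑 * k := by
  classical
  have := Fintype.ofFinite 𝓑
  have h1 : ∑ x : Pt, ∑ B : 𝓑, inc 𝓑 x B = (Nat.card Pt : ℚ) * r := by
    rw [Finset.sum_congr rfl (g := fun _ => (r : ℚ))]
    · simp
    intro x _
    have := sum_inc_mul_inc hD hr x x
    simp only [if_true] at this
    rw [← this]
    refine Finset.sum_congr rfl fun B _ => ?_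
    unfold inc; split_ifs <;> simp
  rw [Finset.sum_comm] at h1
  simp_rw [sum_inc_points hD] at h1
  simp only [Finset.sum_const, Finset.card_univ, nsmul_eq_mul, ← Nat.card_eq_fintype_card] at h1
  exact_mod_cast h1.symm

/-- Fisher's inequality `v ≤ b`: a nonzero rational weight `c` on the points with zero sum on every
block would satisfy `0 = ∑_B (∑_{x ∈ B} c x)² = 3 (∑ c)² + (r - 3) ∑ c²`. -/
lemma fisher [Fintype Pt] (hD : IsDesign 𝓑 k 3) (hr : ∀ x : Pt, repNum 𝓑 x = r) (h3 : 3 < r) :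
    Nat.card Pt ≤ Nat.card 𝓑 := by
  classical
  have := Fintype.ofFinite 𝓑
  by_contra hlt
  push Not at hlt
  let f : (Pt → ℚ) →ₗ[ℚ] (𝓑 → ℚ) := (Matrix.of fun B x => inc 𝓑 x B).mulVecLin
  have hker : f.ker ≠ ⊥ := LinearMap.ker_ne_bot_of_finrank_lt (by
    simpa [Nat.card_eq_fintype_card] using hlt)
  obtain ⟨c, hc, hc0⟩ := (Submodule.ne_bot_iff _).1 hker
  apply hc0
  have hB : ∀ B : 𝓑, ∑ x, inc 𝓑 x B * c x = 0 := fun B => congrFun (LinearMap.mem_ker.1 hc) B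
  have h0 : ∑ x : Pt, ∑ y : Pt, c x * c y * (if x = y then (r : ℚ) else 3) = 0 := by
    calc _ = ∑ x : Pt, ∑ y : Pt, ∑ B : 𝓑, (inc 𝓑 x B * c x) * (inc 𝓑 y B * c y) := by
          refine Finset.sum_congr rfl fun x _ => Finset.sum_congr rfl fun y _ => ?_
          rw [← sum_inc_mul_inc hD hr, Finset.mul_sum]
          refine Finset.sum_congr rfl fun B _ => by ring
      _ = ∑ B : 𝓑, (∑ x, inc 𝓑 x B * c x) * (∑ y, inc 𝓑 y B * c y) := by
          simp_rw [Finset.sum_mul_sum]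
          rw [Finset.sum_comm' (t' := Finset.univ) (s' := fun _ => Finset.univ) (by simp)]
          rw [Finset.sum_comm]
          conv_rhs => rw [Finset.sum_comm]
          refine Finset.sum_congr rfl fun x _ => ?_
          rw [Finset.sum_comm]
      _ = 0 := by simp [hB]
  have h1 : ∀ x y : Pt, c x * c y * (if x = y then (r : ℚ) else 3) =
      3 * (c x * c y) + if x = y then ((r : ℚ) - 3) * (c x * c y) else 0 := by
    intro x y; split_ifs <;> ring
  simp_rw [h1, Finset.sum_add_distrib, ← Finset.mul_sum] at h0
  rw [← Finset.sum_mul] at h0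
  simp only [Finset.sum_ite_eq, Finset.mem_univ, if_true, ← Finset.mul_sum] at h0
  have hr3 : (0 : ℚ) < (r : ℚ) - 3 := by
    have : ((3 : ℕ) : ℚ) < r := by exact_mod_cast h3
    push_cast at this; linarith
  have hs : 0 ≤ ∑ x, c x * c x := Finset.sum_nonneg fun x _ => mul_self_nonneg _
  have hz : ∑ x, c x * c x = 0 := by nlinarith [mul_self_nonneg (∑ x, c x)]
  rw [Finset.sum_eq_zero_iff_of_nonneg (fun x _ => mul_self_nonneg _)] at hz
  funext x
  exact mul_self_eq_zero.1 (hz x (Finset.mem_univ x))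

/-- By flag-transitivity the stabilizer of a point is transitive on the `r` blocks through it. -/
lemma rep_dvd_card_stabilizer {G : Type*} [Group G] [Finite G] [MulAction G Pt]
    (hr : ∀ x : Pt, repNum 𝓑 x = r) (h0 : 0 < r)
    (hacts : ActsOn G 𝓑) (hflag : FlagTransitive G 𝓑) (α : Pt) :
    r ∣ Nat.card (MulAction.stabilizer G α) := by
  have hne : Nonempty {B : Set Pt | B ∈ 𝓑 ∧ α ∈ B} := by
    by_contra h
    rw [not_nonempty_iff] at h
    have := hr α
    rw [repNum, Nat.card_of_isEmpty] at this
    omega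
  obtain ⟨B, hB, hαB⟩ := hne
  have horb : MulAction.orbit (MulAction.stabilizer G α) B = {B : Set Pt | B ∈ 𝓑 ∧ α ∈ B} := by
    ext C
    constructor
    · rintro ⟨g, rfl⟩
      refine ⟨hacts g.1 B hB, ?_⟩
      have h1 : g.1 • α = α := g.2
      have h2 : g.1 • α ∈ g.1 • B := Set.smul_mem_smul_set hαB
      rwa [h1] at h2
    · rintro ⟨hC, hαC⟩
      obtain ⟨g, hg, hgα⟩ := hflag B hB C hC α hαB α hαC
      exact ⟨⟨g, hgα⟩, hg⟩
  have := MulAction.index_stabilizer (MulAction.stabilizer G α) B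
  rw [horb] at this
  rw [← hr α, repNum]
  have h2 := Subgroup.index_dvd_card (MulAction.stabilizer (MulAction.stabilizer G α) B)
  rwa [this] at h2

/-- A `2-(5,3,3)` design is complete: it has ten blocks, as many as there are `3`-subsets. -/
lemma complete_of_five [Fintype Pt] (hD : IsDesign 𝓑 3 3) (hv : Nat.card Pt = 5) (hb : Nat.card 𝓑 = 10)
    (B : Set Pt) : B ∈ 𝓑 ↔ Nat.card B = 3 := by
  classical
  refine ⟨hD.block_card B, ?_⟩
  have hsub : 𝓑 ⊆ {B : Set Pt | Nat.card B = 3} := fun B hB => hD.block_card B hB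
  have hcard : {B : Set Pt | Nat.card B = 3}.ncard ≤ 𝓑.ncard := by
    have h1 : 𝓑.ncard = 10 := hb
    have h3 : {B : Set Pt | Nat.card B = 3}.ncard ≤
        (↑(Finset.powersetCard 3 (Finset.univ : Finset Pt)) : Set (Finset Pt)).ncard := by
      refine Set.ncard_le_ncard_of_injOn (fun B => B.toFinset) ?_ ?_ (Set.toFinite _)
      · intro B hB
        have hB' : Nat.card B = 3 := hB
        simp [Finset.mem_powersetCard, Set.toFinset_card, ← Nat.card_eq_fintype_card, hB']
      · intro B _ C _ h
        exact Set.toFinset_inj.1 h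
    rw [h1]
    refine h3.trans ?_
    rw [Set.ncard_coe_finset, Finset.card_powersetCard, Finset.card_univ,
      ← Nat.card_eq_fintype_card, hv]
    decide
  have := Set.eq_of_subset_of_ncard_le hsub hcard (Set.toFinite _)
  intro hB
  rw [this]; exact hB

end Design

/-- In the setting of a non-trivial, non-symmetric flag-transitive,
point-primitive `2-(v,k,3)` design with `3 ∣ r`, almost simple automorphism group `G` with
socle `X ≅ PSL(2,q)` acting point-primitively with maximal point stabilizer `X_α`:
if `X_α ≅ A₄` with `q = p ≡ ±3 (mod 8)` prime and `p ≢ ±1 (mod 10)`, then `q = 5` and `D`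
is the complete `2-(5,3,3)` design, with `(v,b,r,k) = (5,10,6,3)`. -/
theorem stmt_12
    (q : ℕ) (hq4 : 4 ≤ q)
    (F : Type) [Field F] [Fintype F] (hF : Fintype.card F = q)
    {Pt : Type*} [Fintype Pt] {G : Type*} [Group G] [MulAction G Pt] [FaithfulSMul G Pt]
    -- `D = (Pt, 𝓑)` is a non-trivial, non-symmetric `2-(v,k,3)` design …
    (𝓑 : Set (Set Pt)) (v k : ℕ) (hv : Nat.card Pt = v)
    (hD : IsDesign 𝓑 k 3) (hnt : 2 < k ∧ k < v - 1)
    (hnonsym : Nat.card 𝓑 ≠ v)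
    -- … whose replication number `r` is divisible by 3, …
    (r : ℕ) (hr : ∀ x : Pt, repNum 𝓑 x = r) (h3r : 3 ∣ r)
    -- … admitting the flag-transitive, point-primitive automorphism group `G`, …
    (hacts : ActsOn G 𝓑) (hflag : FlagTransitive G 𝓑)
    (hprim : PointPrimitive G Pt)
    -- … where `G` is almost simple with socle `X ≅ PSL(2,q)` (so `PSL(2,q) ⊴ G ≤ PΓL(2,q)`):
    (X : Subgroup G) (hXnormal : X.Normal)
    (hXiso : Nonempty (X ≃* PSL2 F))
    (hXcent : Subgroup.centralizer (X : Set G) = ⊥)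
    -- `X` acts point-primitively on `D`, with maximal point stabilizer `X_α`:
    (hXprim : PointPrimitive X Pt)
    (α : Pt) (hmax : IsCoatom (MulAction.stabilizer X α))
    -- `X_α ≅ A₄`, with `q = p` a prime, `p ≡ ±3 (mod 8)` and `p ≢ ±1 (mod 10)`:
    (p : ℕ) (hp : p.Prime) (hqp : q = p)
    (hp8 : p % 8 = 3 ∨ p % 8 = 5)
    (hp10 : p % 10 ≠ 1 ∧ p % 10 ≠ 9)
    (hA4 : Nonempty ((MulAction.stabilizer X α) ≃* alternatingGroup (Fin 4)))
    :
    q = 5 ∧ Nat.card Pt = 5 ∧ Nat.card 𝓑 = 10 ∧ r = 6 ∧ k = 3 ∧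
    -- `D` is the complete `2-(5,3,3)` design: the blocks are all `3`-subsets of a `5`-set
    ∃ e : Pt ≃ Fin 5, ∀ B : Set Pt,
      B ∈ 𝓑 ↔ (e '' B) ∈ {C : Set (Fin 5) | Nat.card C = 3} := by
  classical
  subst hqp
  have hodd : Odd q := by rw [Nat.odd_iff]; omega
  have : Fact q.Prime := ⟨hp⟩
  have : CharP F q := charP_of_card_eq_prime hF
  have h2 : (2 : F) ≠ 0 := by
    intro h
    have h' : ((2 : ℕ) : F) = 0 := by exact_mod_cast h
    rw [CharP.cast_eq_zero_iff F q] at h'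
    have := Nat.le_of_dvd (by norm_num) h'
    omega
  have hGfin : Finite G := Finite.of_injective (MulAction.toPermHom G Pt) MulAction.toPerm_injective
  have : MulAction.IsPretransitive G Pt := hprim.1
  have : MulAction.IsPretransitive X Pt := hXprim.1
  obtain ⟨e⟩ := hXiso
  obtain ⟨eA⟩ := hA4
  have hXv : Nat.card X = 12 * v := by
    rw [← Subgroup.card_mul_index (MulAction.stabilizer X α),
      MulAction.index_stabilizer_of_transitive, hv, Nat.card_congr eA.toEquiv,
      nat_card_alternatingGroup, Nat.card_eq_fintype_card, Fintype.card_fin]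
    norm_num [Nat.factorial]
  have hGv : Nat.card G = Nat.card (MulAction.stabilizer G α) * v := by
    rw [← Subgroup.card_mul_index (MulAction.stabilizer G α),
      MulAction.index_stabilizer_of_transitive, hv]
  have hXP : Nat.card X = Nat.card (PSL2 F) := Nat.card_congr e.toEquiv
  obtain ⟨hautfin, haut⟩ := card_aut_PSL hF hodd
  have hGaut : Nat.card G ≤ Nat.card (MulAut (PSL2 F)) := by
    have hinj : Function.Injective (MulAut.conjNormal : G →* MulAut X) := by
      rw [← MonoidHom.ker_eq_bot_iff, eq_bot_iff, ← hXcent]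
      intro g hg
      rw [Subgroup.mem_centralizer_iff]
      intro x hx
      have h1 := congrArg (fun σ : MulAut X => ((σ ⟨x, hx⟩ : X) : G)) (MonoidHom.mem_ker.1 hg)
      simp only [MulAut.conjNormal_apply, MulAut.one_apply] at h1
      rw [mul_inv_eq_iff_eq_mul] at h1
      exact h1.symm
    exact Nat.card_le_card_of_injective (fun g => MulAut.congr e (MulAut.conjNormal g))
      ((MulAut.congr e).injective.comp hinj)
  have hSL := card_SL_two hF
  rw [← card_PSL_two h2, ← hXP, hXv] at hSL
  have hq1 : 0 < q - 1 := by omega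
  have hvq : 24 * v = q * (q ^ 2 - 1) := by
    apply Nat.eq_of_mul_eq_mul_right hq1
    have : q ^ 2 - q = q * (q - 1) := by rw [Nat.mul_sub, mul_one, sq]
    rw [this] at hSL
    linarith
  have hvpos : 0 < v := by omega
  have hstab : Nat.card (MulAction.stabilizer G α) ≤ 24 := by
    apply Nat.le_of_mul_le_mul_right _ hvpos
    rw [← hGv]
    apply Nat.le_of_mul_le_mul_right _ hq1
    calc Nat.card G * (q - 1) ≤ _ := Nat.mul_le_mul_right _ hGaut
      _ ≤ _ := haut
      _ = _ := by rw [← hSL]; ring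
  have hdvd : 12 ∣ Nat.card (MulAction.stabilizer G α) := by
    apply Nat.dvd_of_mul_dvd_mul_right hvpos
    rw [← hXv, ← hGv]
    exact Subgroup.card_subgroup_dvd_card X
  have hstabpos : 0 < Nat.card (MulAction.stabilizer G α) := Nat.card_pos
  have hrk := design_rk hD hr α
  have hvr := design_vr hD hr
  rw [hv] at hrk hvr
  have hr3 : 3 < r := by
    by_contra hle
    have : r * k ≤ 3 * k := Nat.mul_le_mul_right _ (by omega)
    rcases Nat.eq_zero_or_pos r with h0 | h0
    · subst h0; omega
    · omega
  have hfis := fisher hD hr hr3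
  rw [hv] at hfis
  have hkr : k ≤ r := by
    by_contra hlt
    have h1 : v * k ≤ v * r := hvr ▸ Nat.mul_le_mul_right k hfis
    exact hlt (Nat.le_of_mul_le_mul_left h1 hvpos)
  have hrd : r ∣ 24 := by
    refine (rep_dvd_card_stabilizer hr (by omega) hacts hflag α).trans ?_
    have : Nat.card (MulAction.stabilizer G α) = 12 ∨
        Nat.card (MulAction.stabilizer G α) = 24 := by omega
    rcases this with h | h <;> rw [h] <;> norm_num
  have hr24 : r ≤ 24 := Nat.le_of_dvd (by norm_num) hrd
  have hv185 : 3 * v ≤ 555 := by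
    have h1 : r * k ≤ r * r := Nat.mul_le_mul_left r hkr
    have h2 : r * r ≤ 23 * r + 24 := by nlinarith
    omega
  have hq19 : q < 19 := by
    by_contra hge
    have h1 : 19 ^ 2 ≤ q ^ 2 := Nat.pow_le_pow_left (by omega) 2
    have h2 : 19 * (19 ^ 2 - 1) ≤ q * (q ^ 2 - 1) := Nat.mul_le_mul (by omega) (by omega)
    omega
  have hq : q = 5 ∨ q = 13 := by omega
  rcases hq with rfl | rfl
  · have hv5 : v = 5 := by omega
    subst hv5
    have hk3 : k = 3 := by omega
    subst hk3
    have hr6 : r = 6 := by omega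
    have hb : Nat.card 𝓑 = 10 := by omega
    refine ⟨rfl, hv, hb, hr6, rfl, ?_⟩
    refine ⟨(Fintype.equivFin Pt).trans (finCongr (by rw [← Nat.card_eq_fintype_card, hv])), ?_⟩
    intro B
    rw [complete_of_five hD hv hb, Set.mem_ofPred_eq,
      Nat.card_image_of_injective (Equiv.injective _)]
  · exfalso
    have hv91 : v = 91 := by omega
    subst hv91
    interval_cases r <;> omega
end
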